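/- arXiv:1102.5380 — 2 statements merged into one kernel-verified Lean document; each statement's English description precedes it below -/
import Mathlib

section
/- (Kuijlaars–Serra Capizzano) Let (J(a^k,b^k))_k be a sequence of Jacobi matrices with |a_j^k| ≤ 1 and 0 < b_j^k ≤ 1 for all j ≤ k, and suppose there exist bounded measurable functions a, b : [0,1] → [0,1] such that for every ε > 0, the Lebesgue measure of {s ∈ [0,1] : |a_{⌈sk⌉}^k − a(s)| ≥ ε} tends to 0 as k → ∞, and likewise the Lebesgue measure of {s ∈ [0,1] : |b_{⌈sk⌉}^k − b(s)| ≥ ε} tends to 0 as k → ∞. Then for every continuous function φ on [−3,3], lim_{k→∞} (1/k)·Trace[φ(J(a^k,b^k))] = (1/π) ∫_0^1 ∫_0^π φ(a(x) + 2b(x)·cos y) dy dx. -/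
open Filter MeasureTheory

noncomputable section

/-- The `k × k` Jacobi (real symmetric tridiagonal) matrix with diagonal entries
`a 0, …, a (k-1)` and sub/super-diagonal entries `b 0, …, b (k-2)` (0-indexed). -/
def jacobiMatrix (k : ℕ) (a b : ℕ → ℝ) : Matrix (Fin k) (Fin k) ℝ :=
  Matrix.of fun i j =>
    if (i : ℕ) = (j : ℕ) then a i
    else if (i : ℕ) + 1 = (j : ℕ) then b i
    else if (j : ℕ) + 1 = (i : ℕ) then b j
    else 0

theorem jacobiMatrix_isHermitian (k : ℕ) (a b : ℕ → ℝ) :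
    (jacobiMatrix k a b).IsHermitian := by
  show _ = _
  ext i j
  simp only [Matrix.conjTranspose_apply, jacobiMatrix, Matrix.of_apply, star_trivial]
  by_cases h1 : (i : ℕ) = (j : ℕ)
  · have h : i = j := Fin.ext h1
    subst h
    rfl
  · have h1' : ¬ (j : ℕ) = (i : ℕ) := fun h => h1 h.symm
    by_cases h2 : (i : ℕ) + 1 = (j : ℕ)
    · have h3 : ¬ (j : ℕ) + 1 = (i : ℕ) := by omega
      simp [h1, h1', h2, h3]
    · by_cases h3 : (j : ℕ) + 1 = (i : ℕ) <;> simp [h1, h1', h2, h3]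

/-- `Trace[φ(J(a,b))] = ∑ⱼ φ(λⱼ)`, the sum of `φ` over the eigenvalues of the Jacobi matrix. -/
def jacobiTrace (k : ℕ) (a b : ℕ → ℝ) (φ : ℝ → ℝ) : ℝ :=
  ∑ i, φ ((jacobiMatrix_isHermitian k a b).eigenvalues i)

/-- The class `𝒮`: small deviations `∑ᵢ |a_{i+1}^k − a_i^k| = o(k)` and entries in `[0,1]`. -/
def MemS (a : ℕ → ℕ → ℝ) : Prop :=
  ((fun k : ℕ => ∑ i ∈ Finset.range (k - 1), |a k (i + 1) - a k i|)
      =o[Filter.atTop] fun k : ℕ => (k : ℝ)) ∧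
  ∀ k : ℕ, ∀ i < k, a k i ∈ Set.Icc (0 : ℝ) 1

/-- The class `𝒮′`: for every `δ ∈ (0,1)`, `∑ᵢ |a_{i+1}^k − a_i^k| = O(k^{1−δ})`, and
`maxᵢ |a_i^k| = O(log k)`. -/
def MemS' (a : ℕ → ℕ → ℝ) : Prop :=
  (∀ δ : ℝ, δ ∈ Set.Ioo (0 : ℝ) 1 →
    ((fun k : ℕ => ∑ i ∈ Finset.range (k - 1), |a k (i + 1) - a k i|)
        =O[Filter.atTop] fun k : ℕ => (k : ℝ) ^ (1 - δ))) ∧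
  ∃ C : ℝ, ∀ᶠ k : ℕ in Filter.atTop, ∀ i < k, |a k i| ≤ C * Real.log k

/-- `μ`-distributed on `I² = [0,1]²`. -/
def MuDistributedI (a b : ℕ → ℕ → ℝ) (μ : Measure (ℝ × ℝ)) : Prop :=
  ∀ ψ : ℝ × ℝ → ℝ, ContinuousOn ψ (Set.Icc (0 : ℝ) 1 ×ˢ Set.Icc (0 : ℝ) 1) →
    Filter.Tendsto (fun k : ℕ => (1 / (k : ℝ)) * ∑ j ∈ Finset.range k, ψ (a k j, b k j))
      Filter.atTop (nhds (∫ p, ψ p ∂μ))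

/-- `μ`-distributed on `ℝ²` (test functions: bounded continuous). -/
def MuDistributedR (a b : ℕ → ℕ → ℝ) (μ : Measure (ℝ × ℝ)) : Prop :=
  ∀ ψ : ℝ × ℝ → ℝ, Continuous ψ → (∃ C : ℝ, ∀ p, |ψ p| ≤ C) →
    Filter.Tendsto (fun k : ℕ => (1 / (k : ℝ)) * ∑ j ∈ Finset.range k, ψ (a k j, b k j))
      Filter.atTop (nhds (∫ p, ψ p ∂μ))

/-- Tightness via closed bounded rectangles. -/
def TightRect (μ : Measure (ℝ × ℝ)) : Prop :=
  ∀ ε : ℝ, 0 < ε → ∃ x₁ x₂ y₁ y₂ : ℝ,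
    μ ((Set.Icc x₁ x₂ ×ˢ Set.Icc y₁ y₂)ᶜ) < ENNReal.ofReal ε

/-- Almost everywhere increasing sequence of vectors. -/
def AEIncreasing (a : ℕ → ℕ → ℝ) : Prop :=
  Filter.Tendsto
    (fun k : ℕ => (((Finset.range (k - 1)).filter fun i => a k i ≤ a k (i + 1)).card : ℝ) / k)
    Filter.atTop (nhds 1)

/-- Almost everywhere decreasing sequence of vectors. -/
def AEDecreasing (a : ℕ → ℕ → ℝ) : Prop :=
  Filter.Tendsto
    (fun k : ℕ => (((Finset.range (k - 1)).filter fun i => a k (i + 1) ≤ a k i).card : ℝ) / k)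
    Filter.atTop (nhds 1)

/-- Almost everywhere monotone sequence of vectors. -/
def AEMonotone (a : ℕ → ℕ → ℝ) : Prop :=
  AEIncreasing a ∨ AEDecreasing a

/-!
The diagonal entry `(J ^ m)ⱼⱼ` involves only the entries of `J` at distance at most `m` from
`j`. Rescaled to functions on `(0, 1]`, the sequences `a k` and `b k` converge in measure, and
they still do after a fixed shift of the index: this is a translation by `d / k → 0`, and
translations act continuously on `L¹`. Hence the rescaled diagonal entries of `J ^ m` converge
in measure to those of the constant coefficient Jacobi operator with entries `A s` and `B s`,
which Fourier series turn into multiplication by `A s + 2 B s cos θ`. Since everything is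
bounded, averaging over the diagonal gives the convergence of all moments of the spectral
distributions. These live on a fixed compact interval, so the Weierstrass theorem extends the
convergence to continuous functions.
-/

open scoped ENNReal Topology NNReal

section ConvergenceInMeasure

variable {Ω E F G : Type*} [MeasurableSpace Ω] {μ : Measure Ω}

lemma tendstoInMeasure_restrict_iff [PseudoMetricSpace E] {ι : Type*} {l : Filter ι}
    {S : Set Ω} (hS : MeasurableSet S) {f : ι → Ω → E} {g : Ω → E} :
    TendstoInMeasure (μ.restrict S) f l g ↔
      ∀ ε : ℝ, 0 < ε → Tendsto (fun i => μ {x | x ∈ S ∧ ε ≤ dist (f i x) (g x)}) l (𝓝 0) := by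
  simp only [tendstoInMeasure_iff_dist, Measure.restrict_apply' hS, Set.inter_comm _ S]
  rfl

lemma tendstoInMeasure_of_ae_eventuallyEq [IsFiniteMeasure μ] [PseudoEMetricSpace E]
    {f f' : ℕ → Ω → E} {g : Ω → E} (hf : TendstoInMeasure μ f atTop g)
    (hf' : ∀ n, AEStronglyMeasurable (f' n) μ)
    (heq : ∀ᵐ x ∂μ, ∀ᶠ n in atTop, f n x = f' n x) : TendstoInMeasure μ f' atTop g := by
  refine (exists_seq_tendstoInMeasure_atTop_iff hf').2 fun ns hns => ?_
  obtain ⟨ns', hns', hlim⟩ := (hf.comp hns.tendsto_atTop).exists_seq_tendsto_ae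
  refine ⟨ns', hns', ?_⟩
  filter_upwards [hlim, heq] with x hx hx'
  exact hx.congr' ((hns.comp hns').tendsto_atTop.eventually hx')

lemma tendstoInMeasure_continuous_comp₂ [IsFiniteMeasure μ] [PseudoEMetricSpace E]
    [PseudoEMetricSpace F] [PseudoEMetricSpace G] {H : E → F → G}
    (hH : Continuous (Function.uncurry H)) {f : ℕ → Ω → E} {f₀ : Ω → E} {g : ℕ → Ω → F} {g₀ : Ω → F}
    (hfm : ∀ n, AEStronglyMeasurable (f n) μ) (hgm : ∀ n, AEStronglyMeasurable (g n) μ)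
    (hf : TendstoInMeasure μ f atTop f₀) (hg : TendstoInMeasure μ g atTop g₀) :
    TendstoInMeasure μ (fun n x => H (f n x) (g n x)) atTop (fun x => H (f₀ x) (g₀ x)) := by
  have hHm n : AEStronglyMeasurable (fun x => H (f n x) (g n x)) μ :=
    hH.comp_aestronglyMeasurable ((hfm n).prodMk (hgm n))
  refine (exists_seq_tendstoInMeasure_atTop_iff hHm).2 fun ns hns => ?_
  obtain ⟨u, hu, hfu⟩ := (hf.comp hns.tendsto_atTop).exists_seq_tendsto_ae
  obtain ⟨v, hv, hgv⟩ := (hg.comp (hns.comp hu).tendsto_atTop).exists_seq_tendsto_ae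
  refine ⟨u ∘ v, hu.comp hv, ?_⟩
  filter_upwards [hfu, hgv] with x hfx hgx
  exact (hH.tendsto (f₀ x, g₀ x)).comp ((hfx.comp hv.tendsto_atTop).prodMk_nhds hgx)

lemma ae_norm_le_of_tendstoInMeasure [SeminormedAddCommGroup E] {f : ℕ → Ω → E} {g : Ω → E} {M : ℝ}
    (hM : ∀ n, ∀ᵐ x ∂μ, ‖f n x‖ ≤ M) (hf : TendstoInMeasure μ f atTop g) :
    ∀ᵐ x ∂μ, ‖g x‖ ≤ M := by
  obtain ⟨ns, -, hlim⟩ := hf.exists_seq_tendsto_ae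
  filter_upwards [hlim, ae_all_iff.2 hM] with x hx hMx
  exact le_of_tendsto hx.norm (Eventually.of_forall fun n => hMx (ns n))

lemma tendsto_eLpNorm_sub_of_tendstoInMeasure_of_bound [IsFiniteMeasure μ] [NormedAddCommGroup E]
    {f : ℕ → Ω → E} {g : Ω → E} {M : ℝ} {p : ℝ≥0∞} (hp : 1 ≤ p) (hp' : p ≠ ∞)
    (hfm : ∀ n, AEStronglyMeasurable (f n) μ)
    (hM : ∀ n, ∀ᵐ x ∂μ, ‖f n x‖ ≤ M) (hf : TendstoInMeasure μ f atTop g) :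
    Tendsto (fun n => eLpNorm (f n - g) p μ) atTop (𝓝 0) := by
  have hgm : AEStronglyMeasurable g μ := hf.aestronglyMeasurable hfm
  have hg : MemLp g p μ := .of_bound hgm M (ae_norm_le_of_tendstoInMeasure hM hf)
  refine tendsto_Lp_finite_of_tendstoInMeasure hp hp' hfm hg ?_ hf
  refine unifIntegrable_of hp hp' hfm fun ε _ => ⟨M.toNNReal + 1, fun n => ?_⟩
  have hzero : {x | M.toNNReal + 1 ≤ ‖f n x‖₊}.indicator (f n) =ᵐ[μ] 0 := by
    filter_upwards [hM n] with x hx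
    have hlt : ‖f n x‖₊ < M.toNNReal + 1 :=
      (NNReal.le_toNNReal_of_coe_le hx).trans_lt (lt_add_one _)
    exact Set.indicator_of_notMem (s := {x | M.toNNReal + 1 ≤ ‖f n x‖₊}) hlt.not_ge _
  simp [eLpNorm_congr_ae hzero]

lemma tendsto_integral_of_tendstoInMeasure_of_bound [IsFiniteMeasure μ] [NormedAddCommGroup E]
    [NormedSpace ℝ E] {f : ℕ → Ω → E} {g : Ω → E} {M : ℝ}
    (hfm : ∀ n, AEStronglyMeasurable (f n) μ)
    (hM : ∀ n, ∀ᵐ x ∂μ, ‖f n x‖ ≤ M) (hf : TendstoInMeasure μ f atTop g) :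
    Tendsto (fun n => ∫ x, f n x ∂μ) atTop (𝓝 (∫ x, g x ∂μ)) :=
  tendsto_integral_of_L1' g
    (hf.aestronglyMeasurable hfm)
    (Eventually.of_forall fun n => .of_bound (hfm n) M (hM n))
    (tendsto_eLpNorm_sub_of_tendstoInMeasure_of_bound le_rfl ENNReal.one_ne_top hfm hM hf)

end ConvergenceInMeasure

section Translation

variable {G E : Type*} [AddGroup G] [TopologicalSpace G] [IsTopologicalAddGroup G] [R1Space G]
  [MeasurableSpace G] [BorelSpace G] {μ : Measure G} [μ.IsAddRightInvariant]
  [IsLocallyFiniteMeasure μ] [μ.InnerRegularCompactLTTop] [NormedAddCommGroup E]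

lemma tendsto_eLpNorm_comp_add_right_sub {ι : Type*} {l : Filter ι} {p : ℝ≥0∞} [Fact (1 ≤ p)]
    (hp : p ≠ ∞) {f : ι → G → E} {g : G → E} {h : ι → G} (hf : ∀ i, MemLp (f i) p μ)
    (hg : MemLp g p μ) (hfg : Tendsto (fun i => eLpNorm (f i - g) p μ) l (𝓝 0))
    (hh : Tendsto h l (𝓝 0)) :
    Tendsto (fun i => eLpNorm (fun x => f i (x + h i) - g x) p μ) l (𝓝 0) := by
  let τ : G → C(G, G) := fun t => ⟨(· + t), continuous_add_const t⟩
  have hτ : Continuous τ :=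
    ContinuousMap.continuous_of_continuous_uncurry _ (continuous_snd.add continuous_fst)
  have hpres t : MeasurePreserving (τ t) μ μ := measurePreserving_add_right μ t
  have hlim := ((Lp.tendsto_Lp_iff_tendsto_eLpNorm'' f hf g hg).2 hfg).compMeasurePreservingLp
    ((hτ.tendsto 0).comp hh) (fun i => hpres (h i)) (hpres 0) hp
  rw [Lp.tendsto_Lp_iff_tendsto_eLpNorm'] at hlim
  have hcoe (t : G) {u : G → E} (hu : MemLp u p μ) :
      Lp.compMeasurePreserving (τ t) (hpres t) (hu.toLp u) =ᵐ[μ] fun x => u (x + t) :=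
    (Lp.coeFn_compMeasurePreserving _ (hpres t)).trans
      ((hpres t).quasiMeasurePreserving.ae_eq_comp hu.coeFn_toLp)
  refine hlim.congr fun i => eLpNorm_congr_ae ?_
  simpa [Pi.sub_def] using (hcoe (h i) (hf i)).sub (hcoe 0 hg)

/-- Extending the functions by `0` outside `S` turns convergence in measure on `S` into
convergence in `L¹` of the whole group, where translations act continuously. -/
lemma tendstoInMeasure_comp_add_right {S : Set G} (hS : MeasurableSet S) (hSfin : μ S ≠ ∞)
    {f : ℕ → G → E} {g : G → E} {h : ℕ → G} {M : ℝ} (hfm : ∀ n, AEStronglyMeasurable (f n) μ)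
    (hM : ∀ n, ∀ᵐ x ∂μ, ‖f n x‖ ≤ M) (hsupp : ∀ n, Function.support (f n) ⊆ S)
    (hfg : TendstoInMeasure (μ.restrict S) f atTop g) (hh : Tendsto h atTop (𝓝 0)) :
    TendstoInMeasure (μ.restrict S) (fun n x => f n (x + h n)) atTop g := by
  have : IsFiniteMeasure (μ.restrict S) := ⟨by simpa using hSfin.lt_top⟩
  have hMS n : ∀ᵐ x ∂μ.restrict S, ‖f n x‖ ≤ M := ae_restrict_of_ae (hM n)
  have hfmS n : AEStronglyMeasurable (f n) (μ.restrict S) := (hfm n).restrict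
  have hfS n : S.indicator (f n) = f n := Set.indicator_eq_self.2 (hsupp n)
  have hf n : MemLp (f n) 1 μ := by
    rw [← hfS, memLp_indicator_iff_restrict hS]
    exact .of_bound (hfmS n) M (hMS n)
  have hg : MemLp (S.indicator g) 1 μ := by
    rw [memLp_indicator_iff_restrict hS]
    exact .of_bound (hfg.aestronglyMeasurable hfmS) M (ae_norm_le_of_tendstoInMeasure hMS hfg)
  have hL1 : Tendsto (fun n => eLpNorm (f n - S.indicator g) 1 μ) atTop (𝓝 0) := by
    refine (tendsto_eLpNorm_sub_of_tendstoInMeasure_of_bound le_rfl ENNReal.one_ne_top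
      hfmS hMS hfg).congr fun n => ?_
    rw [← eLpNorm_indicator_eq_eLpNorm_restrict hS, Set.indicator_sub', hfS]
  have hshift : TendstoInMeasure μ (fun n x => f n (x + h n)) atTop (S.indicator g) :=
    tendstoInMeasure_of_tendsto_eLpNorm one_ne_zero
      (fun n => (hfm n).comp_measurePreserving (measurePreserving_add_right μ (h n)))
      hg.aestronglyMeasurable
      (tendsto_eLpNorm_comp_add_right_sub ENNReal.one_ne_top hf hg hL1 hh)
  refine TendstoInMeasure.congr_right (indicator_ae_eq_restrict hS) fun ε hε => ?_
  exact tendsto_of_tendsto_of_tendsto_of_le_of_le tendsto_const_nhds (hshift ε hε)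
    (fun _ => zero_le) fun _ => Measure.restrict_apply_le _ _

end Translation

section Moments

lemma integrable_of_continuousOn_of_ae_mem {X E : Type*} [TopologicalSpace X] [T2Space X]
    [MeasurableSpace X] [OpensMeasurableSpace X] [NormedAddCommGroup E]
    [SecondCountableTopologyEither X E] {μ : Measure X} [IsFiniteMeasureOnCompacts μ] {K : Set X}
    (hK : IsCompact K) (hμ : ∀ᵐ x ∂μ, x ∈ K) {φ : X → E} (hφ : ContinuousOn φ K) :
    Integrable φ μ := by
  rw [← Measure.restrict_eq_self_of_ae_mem hμ]
  exact hφ.integrableOn_compact hK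

lemma dist_integral_le_of_ae_mem {X E : Type*} [MeasurableSpace X] [NormedAddCommGroup E]
    [NormedSpace ℝ E] {μ : Measure X} [IsFiniteMeasure μ] {f g : X → E} {S : Set X} {ε : ℝ}
    (hμ : ∀ᵐ x ∂μ, x ∈ S) (hf : Integrable f μ) (hg : Integrable g μ)
    (h : ∀ x ∈ S, dist (f x) (g x) ≤ ε) :
    dist (∫ x, f x ∂μ) (∫ x, g x ∂μ) ≤ ε * μ.real Set.univ := by
  rw [dist_eq_norm, ← integral_sub hf hg]
  exact norm_integral_le_of_norm_le_const
    (hμ.mono fun x hx => (dist_eq_norm (f x) (g x)).ge.trans (h x hx))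

lemma tendsto_integral_eval_of_tendsto_moments {ι : Type*} {l : Filter ι}
    {μ : ι → Measure ℝ} {ν : Measure ℝ} (hμ : ∀ i (m : ℕ), Integrable (· ^ m) (μ i))
    (hν : ∀ m : ℕ, Integrable (· ^ m) ν)
    (h : ∀ m : ℕ, Tendsto (fun i => ∫ x, x ^ m ∂μ i) l (𝓝 (∫ x, x ^ m ∂ν))) (p : Polynomial ℝ) :
    Tendsto (fun i => ∫ x, p.eval x ∂μ i) l (𝓝 (∫ x, p.eval x ∂ν)) := by
  have hsum (κ : Measure ℝ) (hκ : ∀ m : ℕ, Integrable (· ^ m) κ) :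
      ∫ x, p.eval x ∂κ = ∑ m ∈ Finset.range (p.natDegree + 1), p.coeff m * ∫ x, x ^ m ∂κ := by
    simp_rw [Polynomial.eval_eq_sum_range, ← integral_const_mul]
    exact integral_finsetSum _ fun m _ => (hκ m).const_mul _
  simp_rw [hsum _ (hμ _), hsum ν hν]
  exact tendsto_finsetSum _ fun m _ => (h m).const_mul _

lemma tendsto_integral_of_tendsto_moments {ι : Type*} {l : Filter ι} {c d : ℝ}
    {μ : ι → Measure ℝ} {ν : Measure ℝ} [∀ i, IsFiniteMeasure (μ i)] [IsFiniteMeasure ν]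
    (hμ : ∀ i, ∀ᵐ x ∂μ i, x ∈ Set.Icc c d) (hν : ∀ᵐ x ∂ν, x ∈ Set.Icc c d)
    (h : ∀ m : ℕ, Tendsto (fun i => ∫ x, x ^ m ∂μ i) l (𝓝 (∫ x, x ^ m ∂ν)))
    {φ : ℝ → ℝ} (hφ : ContinuousOn φ (Set.Icc c d)) :
    Tendsto (fun i => ∫ x, φ x ∂μ i) l (𝓝 (∫ x, φ x ∂ν)) := by
  have hint (κ : Measure ℝ) [IsFiniteMeasure κ] (hκ : ∀ᵐ x ∂κ, x ∈ Set.Icc c d) {ψ : ℝ → ℝ}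
      (hψ : ContinuousOn ψ (Set.Icc c d)) : Integrable ψ κ :=
    integrable_of_continuousOn_of_ae_mem isCompact_Icc hκ hψ
  have hpoly := tendsto_integral_eval_of_tendsto_moments
    (fun i m => hint (μ i) (hμ i) (continuous_pow m).continuousOn)
    (fun m => hint ν hν (continuous_pow m).continuousOn) h
  have hmass : Tendsto (fun i => (μ i).real Set.univ) l (𝓝 (ν.real Set.univ)) := by
    simpa using h 0
  have hmass' := hmass.eventually_lt_const (lt_add_one _)
  set M := ν.real Set.univ + 1
  have hM : 0 < M := by positivity
  refine Metric.tendsto_nhds.2 fun ε hε => ?_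
  obtain ⟨p, hp⟩ := exists_polynomial_near_of_continuousOn c d φ hφ (ε / (3 * M)) (by positivity)
  have hclose (κ : Measure ℝ) [IsFiniteMeasure κ] (hκ : ∀ᵐ x ∂κ, x ∈ Set.Icc c d)
      (hκM : κ.real Set.univ < M) : dist (∫ x, p.eval x ∂κ) (∫ x, φ x ∂κ) ≤ ε / 3 := calc
    _ ≤ ε / (3 * M) * κ.real Set.univ := dist_integral_le_of_ae_mem hκ
      (hint κ hκ p.continuousOn) (hint κ hκ hφ) fun x hx => (hp x hx).le
    _ ≤ ε / (3 * M) * M := by gcongr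
    _ = ε / 3 := by field_simp
  filter_upwards [Metric.tendsto_nhds.1 (hpoly p) (ε / 3) (by positivity), hmass'] with i hi hiM
  have hμi := hclose (μ i) (hμ i) hiM
  rw [dist_comm] at hμi
  linarith [dist_triangle4 (∫ x, φ x ∂μ i) (∫ x, p.eval x ∂μ i) (∫ x, p.eval x ∂ν) (∫ x, φ x ∂ν),
    hclose ν hν (lt_add_one _)]

end Moments

section JacobiOperator

/-- The bi-infinite Jacobi operator with diagonal entries `α` and off-diagonal entries `β`, where
`β i` couples the sites `i` and `i + 1`. -/
def jacobiOp (α β f : ℤ → ℝ) (i : ℤ) : ℝ :=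
  β (i - 1) * f (i - 1) + α i * f i + β i * f (i + 1)

lemma abs_jacobiOp_le {α β f : ℤ → ℝ} {C D M : ℝ} (hα : ∀ i, |α i| ≤ C) (hβ : ∀ i, |β i| ≤ D)
    (hf : ∀ i, |f i| ≤ M) (i : ℤ) : |jacobiOp α β f i| ≤ (C + 2 * D) * M := by
  have hC : 0 ≤ C := (abs_nonneg _).trans (hα 0)
  have hD : 0 ≤ D := (abs_nonneg _).trans (hβ 0)
  calc |jacobiOp α β f i|
    _ ≤ |β (i - 1)| * |f (i - 1)| + |α i| * |f i| + |β i| * |f (i + 1)| := by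
      simpa only [abs_mul] using!
        abs_add_three (β (i - 1) * f (i - 1)) (α i * f i) (β i * f (i + 1))
    _ ≤ D * M + C * M + D * M := by gcongr <;> apply_assumption
    _ = (C + 2 * D) * M := by ring

lemma abs_iterate_jacobiOp_le {α β f : ℤ → ℝ} {C D M : ℝ} (hα : ∀ i, |α i| ≤ C)
    (hβ : ∀ i, |β i| ≤ D) (hf : ∀ i, |f i| ≤ M) (m : ℕ) (i : ℤ) :
    |(jacobiOp α β)^[m] f i| ≤ (C + 2 * D) ^ m * M := by
  induction m generalizing i with
  | zero => simpa using hf i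
  | succ m ih =>
    rw [Function.iterate_succ_apply', pow_succ', mul_assoc]
    exact abs_jacobiOp_le hα hβ ih i

lemma jacobiOp_semiconj_comp_add_left (α β : ℤ → ℝ) (n : ℤ) :
    Function.Semiconj (fun f : ℤ → ℝ => f ∘ (n + ·)) (jacobiOp α β)
      (jacobiOp (α ∘ (n + ·)) (β ∘ (n + ·))) := fun f => by
  funext i
  simp only [jacobiOp, Function.comp_apply, add_sub_assoc, add_assoc]

lemma iterate_jacobiOp_single_add (α β : ℤ → ℝ) (m : ℕ) (n d : ℤ) :
    (jacobiOp α β)^[m] (Pi.single n 1) (n + d) =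
      (jacobiOp (α ∘ (n + ·)) (β ∘ (n + ·)))^[m] (Pi.single 0 1) d := by
  have hsingle : (Pi.single n 1 : ℤ → ℝ) ∘ (n + ·) = Pi.single 0 1 := by
    funext i
    simp [Pi.single_apply]
  rw [← hsingle]
  exact congrFun ((jacobiOp_semiconj_comp_add_left α β n).iterate_right m _) d

variable {Ω : Type*} [MeasurableSpace Ω] {μ : Measure Ω}

lemma aestronglyMeasurable_iterate_jacobiOp {α β : Ω → ℤ → ℝ}
    (hα : ∀ i, AEStronglyMeasurable (fun ω => α ω i) μ)
    (hβ : ∀ i, AEStronglyMeasurable (fun ω => β ω i) μ) (f : ℤ → ℝ) (m : ℕ) (i : ℤ) :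
    AEStronglyMeasurable (fun ω => (jacobiOp (α ω) (β ω))^[m] f i) μ := by
  induction m generalizing i with
  | zero => exact aestronglyMeasurable_const
  | succ m ih =>
    simp only [Function.iterate_succ_apply']
    exact (((hβ _).mul (ih _)).add ((hα _).mul (ih _))).add ((hβ _).mul (ih _))

lemma tendstoInMeasure_iterate_jacobiOp [IsFiniteMeasure μ] {α β : ℕ → Ω → ℤ → ℝ}
    {α₀ β₀ : Ω → ℤ → ℝ} (hαm : ∀ n i, AEStronglyMeasurable (fun ω => α n ω i) μ)
    (hβm : ∀ n i, AEStronglyMeasurable (fun ω => β n ω i) μ)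
    (hα : ∀ i, TendstoInMeasure μ (fun n ω => α n ω i) atTop (fun ω => α₀ ω i))
    (hβ : ∀ i, TendstoInMeasure μ (fun n ω => β n ω i) atTop (fun ω => β₀ ω i))
    (f : ℤ → ℝ) (m : ℕ) (i : ℤ) :
    TendstoInMeasure μ (fun n ω => (jacobiOp (α n ω) (β n ω))^[m] f i) atTop
      (fun ω => (jacobiOp (α₀ ω) (β₀ ω))^[m] f i) := by
  induction m generalizing i with
  | zero => exact fun ε hε => by simp [hε.ne']
  | succ m ih =>
    simp only [Function.iterate_succ_apply']
    have hm j n := aestronglyMeasurable_iterate_jacobiOp (hαm n) (hβm n) f m j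
    have hαmul j := tendstoInMeasure_continuous_comp₂ continuous_mul (hαm · j) (hm j) (hα j) (ih j)
    have hβmul j j' :=
      tendstoInMeasure_continuous_comp₂ continuous_mul (hβm · j) (hm j') (hβ j) (ih j')
    have hαmulm j n := (hαm n j).mul (hm j n)
    have hβmulm j j' n := (hβm n j).mul (hm j' n)
    exact tendstoInMeasure_continuous_comp₂ continuous_add
      (fun n => (hβmulm _ _ n).add (hαmulm _ n)) (hβmulm _ _)
      (tendstoInMeasure_continuous_comp₂ continuous_add (hβmulm _ _) (hαmulm _) (hβmul _ _)
        (hαmul _)) (hβmul _ _)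

end JacobiOperator

section CosineCoefficients

/-- The cosine coefficients `(1/π) ∫₀^π f(θ) cos(dθ) dθ` of `f`, i.e. the Fourier coefficients of
its even extension. They turn constant coefficient Jacobi operators into multiplications. -/
def cosCoeff (f : ℝ → ℝ) (d : ℤ) : ℝ :=
  (1 / Real.pi) * ∫ θ in (0 : ℝ)..Real.pi, f θ * Real.cos (d * θ)

lemma cosCoeff_one : cosCoeff 1 = Pi.single 0 1 := by
  funext d
  rcases eq_or_ne d 0 with rfl | hd
  · simp [cosCoeff, Real.pi_ne_zero]
  · have hd' : (d : ℝ) ≠ 0 := Int.cast_ne_zero.2 hd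
    simp [cosCoeff, hd, intervalIntegral.integral_comp_mul_left (fun t => Real.cos t) hd']

lemma jacobiOp_const_cosCoeff {f : ℝ → ℝ} (hf : IntervalIntegrable f volume 0 Real.pi) (x y : ℝ) :
    jacobiOp (fun _ => x) (fun _ => y) (cosCoeff f) =
      cosCoeff fun θ => (x + 2 * y * Real.cos θ) * f θ := by
  funext d
  have hint (e : ℤ) : IntervalIntegrable (fun θ => f θ * Real.cos (e * θ)) volume 0 Real.pi :=
    hf.mul_continuousOn (by fun_prop)
  have hsplit (θ : ℝ) : (x + 2 * y * Real.cos θ) * f θ * Real.cos (d * θ) =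
      y * (f θ * Real.cos ((d - 1 : ℤ) * θ)) + x * (f θ * Real.cos (d * θ)) +
        y * (f θ * Real.cos ((d + 1 : ℤ) * θ)) := by
    push_cast
    rw [sub_one_mul, add_one_mul, Real.cos_add, Real.cos_sub]
    ring
  simp only [jacobiOp, cosCoeff, hsplit]
  rw [intervalIntegral.integral_add (((hint _).const_mul _).add ((hint _).const_mul _))
    ((hint _).const_mul _), intervalIntegral.integral_add ((hint _).const_mul _)
    ((hint _).const_mul _)]
  simp only [intervalIntegral.integral_const_mul]
  ring

lemma iterate_jacobiOp_const_single (x y : ℝ) (m : ℕ) :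
    (jacobiOp (fun _ => x) (fun _ => y))^[m] (Pi.single 0 1) =
      cosCoeff fun θ => (x + 2 * y * Real.cos θ) ^ m := by
  induction m with
  | zero => simpa using! cosCoeff_one.symm
  | succ m ih =>
    have hcont : Continuous fun θ => (x + 2 * y * Real.cos θ) ^ m := by fun_prop
    rw [Function.iterate_succ_apply', ih, jacobiOp_const_cosCoeff (hcont.intervalIntegrable _ _)]
    simp only [pow_succ']

end CosineCoefficients

section ZeroExtension

/-- The bi-infinite sequence equal to `u` on `{0, …, N - 1}` and to `0` elsewhere. A `k × k` Jacobi
matrix is a diagonal block of the Jacobi operator with entries `zeroExtend k a` and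
`zeroExtend (k - 1) b`; the length `N` is an integer so that `k - 1` is not truncated. -/
def zeroExtend (N : ℤ) (u : ℕ → ℝ) : ℤ → ℝ :=
  (Set.Ico 0 N).indicator fun i => u i.toNat

lemma abs_zeroExtend_le {N : ℤ} {u : ℕ → ℝ} {C : ℝ} (hC : 0 ≤ C) (hu : ∀ j : ℕ, j < N → |u j| ≤ C)
    (i : ℤ) : |zeroExtend N u i| ≤ C := by
  by_cases hi : i ∈ Set.Ico 0 N
  · lift i to ℕ using hi.1
    simpa [zeroExtend, hi] using hu i hi.2
  · simpa [zeroExtend, hi] using hC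

lemma sum_fin_ite_intCast_eq {k : ℕ} (g : ℤ → ℝ) (c : ℤ) :
    ∑ l : Fin k, (if ((l : ℕ) : ℤ) = c then g l else 0) =
      (Set.Ico (0 : ℤ) k).indicator g c := by
  by_cases hc : c ∈ Set.Ico (0 : ℤ) k
  · lift c to ℕ using hc.1
    have hck : c < k := by exact_mod_cast hc.2
    rw [Set.indicator_of_mem hc, Finset.sum_eq_single ⟨c, hck⟩] <;> simp +contextual [Fin.ext_iff]
  · rw [Set.indicator_of_notMem hc]
    refine Finset.sum_eq_zero fun l _ => if_neg ?_
    rintro rfl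
    exact hc ⟨by positivity, by exact_mod_cast l.isLt⟩

lemma jacobiMatrix_apply_eq_zeroExtend (k : ℕ) (a b : ℕ → ℝ) (i l : Fin k) :
    jacobiMatrix k a b i l =
      (if (l : ℤ) = i - 1 then zeroExtend (k - 1) b l else 0) +
        (if (l : ℤ) = i then zeroExtend k a l else 0) +
          (if (l : ℤ) = i + 1 then zeroExtend (k - 1) b i else 0) := by
  obtain ⟨i, hi⟩ := i
  obtain ⟨l, hl⟩ := l
  simp only [jacobiMatrix, Matrix.of_apply, zeroExtend, Set.indicator, Set.mem_Ico,
    Int.toNat_natCast]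
  grind

lemma sum_jacobiMatrix_mul_eq_jacobiOp (k : ℕ) (a b : ℕ → ℝ) (f : ℤ → ℝ) (i : Fin k) :
    ∑ l : Fin k, jacobiMatrix k a b i l * f l =
      jacobiOp (zeroExtend k a) (zeroExtend (k - 1) b) f i := by
  have hleft : (Set.Ico (0 : ℤ) k).indicator (fun l => zeroExtend (k - 1) b l * f l) (i - 1) =
      zeroExtend (k - 1) b (i - 1) * f (i - 1) := by
    simp only [zeroExtend, Set.indicator, Set.mem_Ico]
    grind
  have hdiag : (Set.Ico (0 : ℤ) k).indicator (fun l => zeroExtend k a l * f l) i =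
      zeroExtend k a i * f i :=
    Set.indicator_of_mem (Set.mem_Ico.2 ⟨by positivity, by exact_mod_cast i.isLt⟩) _
  have hright : (Set.Ico (0 : ℤ) k).indicator (fun l => zeroExtend (k - 1) b i * f l) (i + 1) =
      zeroExtend (k - 1) b i * f (i + 1) := by
    simp only [zeroExtend, Set.indicator, Set.mem_Ico]
    grind
  simp only [jacobiMatrix_apply_eq_zeroExtend, add_mul, ite_mul, zero_mul, Finset.sum_add_distrib]
  rw [sum_fin_ite_intCast_eq (fun l => zeroExtend (k - 1) b l * f l),
    sum_fin_ite_intCast_eq (fun l => zeroExtend k a l * f l),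
    sum_fin_ite_intCast_eq (fun l => zeroExtend (k - 1) b i * f l), hleft, hdiag, hright]
  rfl

lemma jacobiMatrix_pow_apply (k : ℕ) (a b : ℕ → ℝ) (m : ℕ) (i j : Fin k) :
    (jacobiMatrix k a b ^ m) i j =
      (jacobiOp (zeroExtend k a) (zeroExtend (k - 1) b))^[m] (Pi.single (j : ℤ) 1) i := by
  induction m generalizing i with
  | zero => simp [Matrix.one_apply, Pi.single_apply, Fin.ext_iff]
  | succ m ih =>
    rw [pow_succ', Matrix.mul_apply, Function.iterate_succ_apply',
      ← sum_jacobiMatrix_mul_eq_jacobiOp]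
    simp only [ih]

lemma sum_eigenvalues_pow_eq_trace_pow {𝕜 n : Type*} [RCLike 𝕜] [Fintype n] [DecidableEq n]
    {M : Matrix n n 𝕜} (hM : M.IsHermitian) (m : ℕ) :
    ∑ i, (hM.eigenvalues i : 𝕜) ^ m = (M ^ m).trace := by
  conv_rhs => rw [hM.spectral_theorem]
  rw [← map_pow, Unitary.conjStarAlgAut_apply, Matrix.trace_mul_cycle]
  simp [Matrix.diagonal_pow, Matrix.trace_diagonal]

lemma jacobiTrace_pow (k : ℕ) (a b : ℕ → ℝ) (m : ℕ) :
    jacobiTrace k a b (· ^ m) = ∑ j ∈ Finset.range k,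
      (jacobiOp (zeroExtend k a) (zeroExtend (k - 1) b))^[m] (Pi.single (j : ℤ) 1) j := by
  rw [← Fin.sum_univ_eq_sum_range fun j : ℕ =>
    (jacobiOp (zeroExtend k a) (zeroExtend (k - 1) b))^[m] (Pi.single (j : ℤ) 1) (j : ℤ)]
  simpa [Matrix.trace, jacobiMatrix_pow_apply] using!
    sum_eigenvalues_pow_eq_trace_pow (jacobiMatrix_isHermitian k a b) m

lemma abs_eigenvalues_le_of_sum_norm_le {𝕜 n : Type*} [RCLike 𝕜] [Fintype n] [DecidableEq n]
    {M : Matrix n n 𝕜} (hM : M.IsHermitian) {R : ℝ} (hR : ∀ l, ∑ j, ‖M l j‖ ≤ R) (i : n) :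
    |hM.eigenvalues i| ≤ R := by
  have heig : Module.End.HasEigenvalue (Matrix.toLin' M) (hM.eigenvalues i : 𝕜) := by
    rw [Module.End.hasEigenvalue_iff_mem_spectrum, Matrix.spectrum_toLin']
    exact (spectrum.algebraMap_mem_iff 𝕜).2 (hM.eigenvalues_mem_spectrum_real i)
  obtain ⟨l, hl⟩ := eigenvalue_mem_ball heig
  calc |hM.eigenvalues i|
    _ = ‖(hM.eigenvalues i : 𝕜)‖ := (RCLike.norm_ofReal _).symm
    _ ≤ ‖M l l‖ + ∑ j ∈ Finset.univ.erase l, ‖M l j‖ := norm_le_norm_add_const_of_dist_le hl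
    _ = ∑ j, ‖M l j‖ := Finset.add_sum_erase _ (fun j => ‖M l j‖) (Finset.mem_univ l)
    _ ≤ R := hR l

lemma abs_eigenvalues_jacobiMatrix_le {k : ℕ} {a b : ℕ → ℝ} {C D : ℝ} (hC : 0 ≤ C) (hD : 0 ≤ D)
    (ha : ∀ j < k, |a j| ≤ C) (hb : ∀ j, j + 1 < k → |b j| ≤ D) (i : Fin k) :
    |(jacobiMatrix_isHermitian k a b).eigenvalues i| ≤ C + 2 * D := by
  refine abs_eigenvalues_le_of_sum_norm_le _ (fun l => ?_) i
  have habs j : ‖jacobiMatrix k a b l j‖ = jacobiMatrix k (|a ·|) (|b ·|) l j * 1 := by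
    simp only [jacobiMatrix, Matrix.of_apply]
    split_ifs <;> simp
  have hα := abs_zeroExtend_le (N := k) hC (u := (|a ·|)) (by simpa using ha)
  have hβ := abs_zeroExtend_le (N := k - 1) hD (u := (|b ·|)) fun j hj => by
    simpa using hb j (by omega)
  simp only [habs, sum_jacobiMatrix_mul_eq_jacobiOp k _ _ fun _ => 1]
  simpa using (le_abs_self _).trans
    (abs_jacobiOp_le (M := 1) hα hβ (f := fun _ => 1) (by simp) l)

end ZeroExtension

section Cells

/-- The index `j` of the cell `(j/k, (j+1)/k]` containing `s`. -/
def cellIndex (k : ℕ) (s : ℝ) : ℤ := ⌈s * k⌉ - 1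

lemma measurable_comp_cellIndex {X : Type*} [MeasurableSpace X] (F : ℤ → X) (k : ℕ) :
    Measurable fun s => F (cellIndex k s) :=
  (measurable_of_countable F).comp
    ((Int.measurable_ceil.comp (measurable_id.mul_const _)).sub_const _)

lemma cellIndex_eq_iff {k : ℕ} (hk : 0 < k) {s : ℝ} {j : ℤ} :
    cellIndex k s = j ↔ s ∈ Set.Ioc (j / k : ℝ) ((j + 1) / k) := by
  have hk' : (0 : ℝ) < k := Nat.cast_pos.2 hk
  rw [cellIndex, sub_eq_iff_eq_add, Int.ceil_eq_iff, Set.mem_Ioc, div_lt_iff₀ hk',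
    le_div_iff₀ hk']
  simp

lemma cellIndex_add_div {k : ℕ} (hk : 0 < k) (s : ℝ) (d : ℤ) :
    cellIndex k (s + d / k) = cellIndex k s + d := by
  have hk' : (k : ℝ) ≠ 0 := Nat.cast_ne_zero.2 hk.ne'
  rw [cellIndex, cellIndex, add_mul, div_mul_cancel₀ _ hk', Int.ceil_add_intCast]
  ring

lemma mem_Ioc_of_cellIndex_mem_Ico {k : ℕ} {s : ℝ} (hs : cellIndex k s ∈ Set.Ico (0 : ℤ) k) :
    s ∈ Set.Ioc 0 1 := by
  have hk : (0 : ℝ) < k := by exact_mod_cast hs.1.trans_lt hs.2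
  have hcell := (cellIndex_eq_iff (k := k) (s := s) (by exact_mod_cast hk)).1 rfl
  have hleft : (0 : ℝ) ≤ cellIndex k s := by exact_mod_cast hs.1
  have hright : (cellIndex k s + 1 : ℝ) ≤ k := by exact_mod_cast Int.add_one_le_of_lt hs.2
  exact ⟨(by positivity : (0 : ℝ) ≤ cellIndex k s / k).trans_lt hcell.1,
    hcell.2.trans ((div_le_one hk).2 hright)⟩

lemma integral_comp_cellIndex {E : Type*} [NormedAddCommGroup E] [NormedSpace ℝ E]
    [CompleteSpace E] {k : ℕ} (hk : 0 < k) (F : ℤ → E) :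
    ∫ s in (0 : ℝ)..1, F (cellIndex k s) = (1 / k : ℝ) • ∑ j ∈ Finset.range k, F j := by
  have hk' : (k : ℝ) ≠ 0 := Nat.cast_ne_zero.2 hk.ne'
  have hcell (j : ℕ) : Set.EqOn (fun s => F (cellIndex k s)) (fun _ => F j)
      (Set.uIoc (j / k : ℝ) ((j + 1 : ℕ) / k)) := fun s hs => by
    rw [Set.uIoc_of_le (by gcongr; simp)] at hs
    exact congrArg F ((cellIndex_eq_iff hk).2 (by simpa using hs))
  have hsum := intervalIntegral.sum_integral_adjacent_intervals (μ := volume)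
    (f := fun s => F (cellIndex k s)) (a := fun j : ℕ => (j / k : ℝ)) (n := k)
    fun j _ => (intervalIntegrable_const (c := F j)).congr (hcell j).symm
  rw [Nat.cast_zero, zero_div, div_self hk'] at hsum
  rw [← hsum, Finset.smul_sum]
  refine Finset.sum_congr rfl fun j _ => ?_
  rw [intervalIntegral.integral_congr_ae (Eventually.of_forall fun s hs => hcell j hs),
    intervalIntegral.integral_const, ← sub_div]
  simp

lemma tendstoInMeasure_zeroExtend_cellIndex {u : ℕ → ℕ → ℝ} {A : ℝ → ℝ} (r : ℤ)
    (hu : TendstoInMeasure (volume.restrict (Set.Ioc 0 1))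
      (fun k s => u k (⌈s * (k : ℝ)⌉₊ - 1)) atTop A) :
    TendstoInMeasure (volume.restrict (Set.Ioc 0 1))
      (fun (k : ℕ) s => zeroExtend (k - r) (u k) (cellIndex k s)) atTop A := by
  refine tendstoInMeasure_of_ae_eventuallyEq hu
    (fun k => (measurable_comp_cellIndex _ k).aestronglyMeasurable) ?_
  rw [← restrict_Ioo_eq_restrict_Ioc]
  filter_upwards [ae_restrict_mem measurableSet_Ioo] with s hs
  have hgap : Tendsto (fun k : ℕ => (1 - s) * k) atTop atTop :=
    tendsto_natCast_atTop_atTop.const_mul_atTop (sub_pos.2 hs.2)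
  filter_upwards [hgap.eventually_ge_atTop (r : ℝ), eventually_gt_atTop 0] with k hkr hk
  have hceil : 0 < ⌈s * (k : ℝ)⌉ := Int.ceil_pos.2 (by have := hs.1; positivity)
  have hindex : cellIndex k s < k - r :=
    Int.sub_one_lt_of_le (Int.ceil_le.2 (by push_cast; linarith))
  have hmem : cellIndex k s ∈ Set.Ico 0 (k - r) := ⟨Int.le_sub_one_of_lt hceil, hindex⟩
  rw [zeroExtend, Set.indicator_of_mem hmem, cellIndex, ← Int.ceil_toNat]
  congr 1
  lia

lemma tendstoInMeasure_zeroExtend_cellIndex_add {u : ℕ → ℕ → ℝ} {A : ℝ → ℝ} {r : ℤ} {C : ℝ}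
    (hr : 0 ≤ r) (hC : 0 ≤ C) (hb : ∀ k j : ℕ, j < (k - r : ℤ) → |u k j| ≤ C)
    (hu : TendstoInMeasure (volume.restrict (Set.Ioc 0 1))
      (fun k s => u k (⌈s * (k : ℝ)⌉₊ - 1)) atTop A) (d : ℤ) :
    TendstoInMeasure (volume.restrict (Set.Ioc 0 1))
      (fun (k : ℕ) s => zeroExtend (k - r) (u k) (cellIndex k s + d)) atTop A := by
  have hsupp (k : ℕ) : Function.support (fun s => zeroExtend (k - r) (u k) (cellIndex k s)) ⊆
      Set.Ioc 0 1 := fun s hs => by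
    have hmem := Set.mem_of_indicator_ne_zero hs
    exact mem_Ioc_of_cellIndex_mem_Ico ⟨hmem.1, hmem.2.trans_le (by lia)⟩
  have hshift : Tendsto (fun k : ℕ => (d / k : ℝ)) atTop (𝓝 0) :=
    tendsto_const_div_atTop_nhds_zero_nat _
  refine (tendstoInMeasure_comp_add_right measurableSet_Ioc measure_Ioc_lt_top.ne
    (fun k => (measurable_comp_cellIndex _ k).aestronglyMeasurable)
    (fun k => Eventually.of_forall fun s => abs_zeroExtend_le hC (hb k) _) hsupp
    (tendstoInMeasure_zeroExtend_cellIndex r hu) hshift).congr' ?_ EventuallyEq.rfl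
  filter_upwards [eventually_gt_atTop 0] with k hk
  exact .of_forall fun s => congrArg (zeroExtend (k - r) (u k)) (cellIndex_add_div hk s d)

lemma aemeasurable_of_tendstoInMeasure_step {u : ℕ → ℕ → ℝ} {A : ℝ → ℝ}
    (hu : TendstoInMeasure (volume.restrict (Set.Ioc 0 1))
      (fun k s => u k (⌈s * (k : ℝ)⌉₊ - 1)) atTop A) :
    AEMeasurable A (volume.restrict (Set.Ioc 0 1)) :=
  (tendstoInMeasure_zeroExtend_cellIndex 0 hu).aemeasurable
    fun k => (measurable_comp_cellIndex _ k).aemeasurable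

lemma ae_abs_le_of_tendstoInMeasure_step {u : ℕ → ℕ → ℝ} {A : ℝ → ℝ} {r : ℤ} {C : ℝ}
    (hC : 0 ≤ C) (hb : ∀ k j : ℕ, j < (k - r : ℤ) → |u k j| ≤ C)
    (hu : TendstoInMeasure (volume.restrict (Set.Ioc 0 1))
      (fun k s => u k (⌈s * (k : ℝ)⌉₊ - 1)) atTop A) :
    ∀ᵐ s ∂volume.restrict (Set.Ioc 0 1), |A s| ≤ C :=
  ae_norm_le_of_tendstoInMeasure
    (fun k => Eventually.of_forall fun _ => abs_zeroExtend_le hC (hb k) _)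
    (tendstoInMeasure_zeroExtend_cellIndex r hu)

end Cells

section MomentConvergence

lemma tendsto_jacobiTrace_pow {a b : ℕ → ℕ → ℝ} {A B : ℝ → ℝ} {C D : ℝ} (hC : 0 ≤ C) (hD : 0 ≤ D)
    (ha : ∀ k, ∀ j < k, |a k j| ≤ C) (hb : ∀ k j, j + 1 < k → |b k j| ≤ D)
    (hA : TendstoInMeasure (volume.restrict (Set.Ioc 0 1))
      (fun k s => a k (⌈s * (k : ℝ)⌉₊ - 1)) atTop A)
    (hB : TendstoInMeasure (volume.restrict (Set.Ioc 0 1))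
      (fun k s => b k (⌈s * (k : ℝ)⌉₊ - 1)) atTop B) (m : ℕ) :
    Tendsto (fun k : ℕ => (1 / (k : ℝ)) * jacobiTrace k (a k) (b k) (· ^ m)) atTop
      (𝓝 (∫ s in (0 : ℝ)..1, cosCoeff (fun θ => (A s + 2 * B s * Real.cos θ) ^ m) 0)) := by
  set α : ℕ → ℝ → ℤ → ℝ := fun k s d => zeroExtend k (a k) (cellIndex k s + d)
  set β : ℕ → ℝ → ℤ → ℝ := fun k s d => zeroExtend (k - 1) (b k) (cellIndex k s + d)
  have hαC k s d : |α k s d| ≤ C := abs_zeroExtend_le hC (fun j hj => ha k j (by simpa using hj)) _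
  have hβD k s d : |β k s d| ≤ D := abs_zeroExtend_le hD (fun j hj => hb k j (by lia)) _
  have hαm k d : AEStronglyMeasurable (fun s => α k s d) (volume.restrict (Set.Ioc 0 1)) :=
    (measurable_comp_cellIndex (fun i => zeroExtend k (a k) (i + d)) k).aestronglyMeasurable
  have hβm k d : AEStronglyMeasurable (fun s => β k s d) (volume.restrict (Set.Ioc 0 1)) :=
    (measurable_comp_cellIndex (fun i => zeroExtend (k - 1) (b k) (i + d)) k).aestronglyMeasurable
  have hα d : TendstoInMeasure (volume.restrict (Set.Ioc 0 1)) (α · · d) atTop A := by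
    simpa [α] using tendstoInMeasure_zeroExtend_cellIndex_add le_rfl hC
      (fun k j hj => ha k j (by simpa using hj)) hA d
  have hβ d : TendstoInMeasure (volume.restrict (Set.Ioc 0 1)) (β · · d) atTop B :=
    tendstoInMeasure_zeroExtend_cellIndex_add zero_le_one hD (fun k j hj => hb k j (by lia)) hB d
  have hentry := tendsto_integral_of_tendstoInMeasure_of_bound
    (fun k => aestronglyMeasurable_iterate_jacobiOp (hαm k) (hβm k) (Pi.single 0 1) m 0)
    (fun k => Eventually.of_forall fun s =>
      abs_iterate_jacobiOp_le (M := 1) (hαC k s) (hβD k s) (fun i => ?_) m 0)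
    (tendstoInMeasure_iterate_jacobiOp hαm hβm hα hβ (Pi.single 0 1) m 0)
  · simp only [iterate_jacobiOp_const_single, ← intervalIntegral.integral_of_le zero_le_one]
      at hentry
    refine hentry.congr' ?_
    filter_upwards [eventually_gt_atTop 0] with k hk
    rw [jacobiTrace_pow, ← smul_eq_mul, ← integral_comp_cellIndex hk fun n : ℤ =>
      (jacobiOp (zeroExtend k (a k)) (zeroExtend (k - 1) (b k)))^[m] (Pi.single n 1) n]
    congr 1
    funext s
    simpa [α, β] using! (iterate_jacobiOp_single_add _ _ m (cellIndex k s) 0).symm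
  · rcases eq_or_ne i 0 with rfl | hi <;> simp [*]

end MomentConvergence

section Distributions

/-- The normalised eigenvalue counting measure of `jacobiMatrix k a b`. -/
def spectralDistribution (k : ℕ) (a b : ℕ → ℝ) : Measure ℝ :=
  (k : ℝ≥0)⁻¹ • ∑ i, Measure.dirac ((jacobiMatrix_isHermitian k a b).eigenvalues i)

instance (k : ℕ) (a b : ℕ → ℝ) : IsFiniteMeasure (spectralDistribution k a b) := by
  unfold spectralDistribution
  infer_instance

lemma integral_spectralDistribution (k : ℕ) (a b : ℕ → ℝ) (φ : ℝ → ℝ) :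
    ∫ t, φ t ∂spectralDistribution k a b = (1 / (k : ℝ)) * jacobiTrace k a b φ := by
  rw [spectralDistribution, integral_smul_nnreal_measure,
    integral_finsetSum_measure fun i _ => integrable_dirac (by simp)]
  simp [jacobiTrace, NNReal.smul_def]

lemma ae_spectralDistribution_mem_Icc {k : ℕ} {a b : ℕ → ℝ} {C D : ℝ} (hC : 0 ≤ C) (hD : 0 ≤ D)
    (ha : ∀ j < k, |a j| ≤ C) (hb : ∀ j, j + 1 < k → |b j| ≤ D) :
    ∀ᵐ t ∂spectralDistribution k a b, t ∈ Set.Icc (-(C + 2 * D)) (C + 2 * D) := by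
  refine Measure.ae_smul_measure (ae_finsetSum_measure_iff.2 fun i _ => ?_) _
  exact (ae_dirac_iff measurableSet_Icc).2 <| abs_le.1 <|
    abs_eigenvalues_jacobiMatrix_le hC hD ha hb i

/-- The distribution of the symbol `A x + 2 B x cos y` for `(x, y)` uniform in
`(0, 1] × (0, π]`. -/
def symbolDistribution (A B : ℝ → ℝ) : Measure ℝ :=
  ((volume.restrict (Set.Ioc 0 1)).prod
    (NNReal.pi⁻¹ • volume.restrict (Set.Ioc 0 Real.pi))).map
      fun p : ℝ × ℝ => A p.1 + 2 * B p.1 * Real.cos p.2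

instance (A B : ℝ → ℝ) : IsFiniteMeasure (symbolDistribution A B) := by
  unfold symbolDistribution
  infer_instance

variable {A B : ℝ → ℝ}

lemma aemeasurable_symbol {μ ν : Measure ℝ} [SFinite ν] (hA : AEMeasurable A μ)
    (hB : AEMeasurable B μ) :
    AEMeasurable (fun p : ℝ × ℝ => A p.1 + 2 * B p.1 * Real.cos p.2) (μ.prod ν) :=
  hA.comp_fst.add ((hB.comp_fst.const_mul 2).mul
    (Real.measurable_cos.comp measurable_snd).aemeasurable)

lemma integral_symbolDistribution (hA : AEMeasurable A (volume.restrict (Set.Ioc 0 1)))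
    (hB : AEMeasurable B (volume.restrict (Set.Ioc 0 1))) {φ : ℝ → ℝ}
    (hφ : Integrable φ (symbolDistribution A B)) :
    ∫ t, φ t ∂symbolDistribution A B = (1 / Real.pi) *
      ∫ x in (0 : ℝ)..1, ∫ y in (0 : ℝ)..Real.pi, φ (A x + 2 * B x * Real.cos y) := by
  have hsymbol := aemeasurable_symbol
    (ν := NNReal.pi⁻¹ • volume.restrict (Set.Ioc 0 Real.pi)) hA hB
  rw [symbolDistribution, integral_map hsymbol hφ.aestronglyMeasurable,
    integral_prod (fun p : ℝ × ℝ => φ (A p.1 + 2 * B p.1 * Real.cos p.2))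
      (hφ.comp_aemeasurable hsymbol)]
  simp only [integral_smul_nnreal_measure, NNReal.smul_def, integral_smul,
    intervalIntegral.integral_of_le zero_le_one, intervalIntegral.integral_of_le Real.pi_pos.le]
  simp

lemma ae_symbolDistribution_mem_Icc {C D : ℝ} (hA : AEMeasurable A (volume.restrict (Set.Ioc 0 1)))
    (hB : AEMeasurable B (volume.restrict (Set.Ioc 0 1)))
    (hAC : ∀ᵐ x ∂volume.restrict (Set.Ioc 0 1), |A x| ≤ C)
    (hBD : ∀ᵐ x ∂volume.restrict (Set.Ioc 0 1), |B x| ≤ D) :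
    ∀ᵐ t ∂symbolDistribution A B, t ∈ Set.Icc (-(C + 2 * D)) (C + 2 * D) := by
  refine (ae_map_iff (aemeasurable_symbol hA hB) measurableSet_Icc).2 ?_
  filter_upwards [Measure.quasiMeasurePreserving_fst.ae hAC,
    Measure.quasiMeasurePreserving_fst.ae hBD] with p hAp hBp
  have hD : 0 ≤ D := (abs_nonneg _).trans hBp
  refine abs_le.1 ?_
  calc |A p.1 + 2 * B p.1 * Real.cos p.2|
    _ ≤ |A p.1| + 2 * |B p.1| * |Real.cos p.2| := by
      simpa [abs_mul] using abs_add_le (A p.1) (2 * B p.1 * Real.cos p.2)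
    _ ≤ C + 2 * D * 1 := by
      gcongr
      exact Real.abs_cos_le_one _
    _ = C + 2 * D := by ring

end Distributions

theorem trace_formula_ksc_general {a b : ℕ → ℕ → ℝ} {C D : ℝ} (ha : ∀ k, ∀ j < k, |a k j| ≤ C)
    (hb : ∀ k j, j + 1 < k → |b k j| ≤ D) {A B : ℝ → ℝ}
    (hA : TendstoInMeasure (volume.restrict (Set.Icc 0 1))
      (fun k s => a k (⌈s * (k : ℝ)⌉₊ - 1)) atTop A)
    (hB : TendstoInMeasure (volume.restrict (Set.Icc 0 1))
      (fun k s => b k (⌈s * (k : ℝ)⌉₊ - 1)) atTop B)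
    {φ : ℝ → ℝ} (hφ : ContinuousOn φ (Set.Icc (-(C + 2 * D)) (C + 2 * D))) :
    Tendsto (fun k : ℕ => (1 / (k : ℝ)) * jacobiTrace k (a k) (b k) φ) atTop
      (𝓝 ((1 / Real.pi) *
        ∫ x in (0 : ℝ)..1, ∫ y in (0 : ℝ)..Real.pi, φ (A x + 2 * B x * Real.cos y))) := by
  rw [← restrict_Ioc_eq_restrict_Icc] at hA hB
  have hC : 0 ≤ C := (abs_nonneg _).trans (ha 1 0 one_pos)
  have hD : 0 ≤ D := (abs_nonneg _).trans (hb 2 0 one_lt_two)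
  have hAm := aemeasurable_of_tendstoInMeasure_step hA
  have hBm := aemeasurable_of_tendstoInMeasure_step hB
  have hAC := ae_abs_le_of_tendstoInMeasure_step (r := 0) hC
    (fun k j hj => ha k j (by simpa using hj)) hA
  have hBD := ae_abs_le_of_tendstoInMeasure_step (r := 1) hD (fun k j hj => hb k j (by lia)) hB
  have hspec k := ae_spectralDistribution_mem_Icc hC hD (ha k) (hb k)
  have hsymb := ae_symbolDistribution_mem_Icc hAm hBm hAC hBD
  have hint {ψ : ℝ → ℝ} (hψ : ContinuousOn ψ (Set.Icc (-(C + 2 * D)) (C + 2 * D))) :=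
    integral_symbolDistribution hAm hBm
      (integrable_of_continuousOn_of_ae_mem isCompact_Icc hsymb hψ)
  have hmoments (m : ℕ) :
      Tendsto (fun k => ∫ t, t ^ m ∂spectralDistribution k (a k) (b k)) atTop
        (𝓝 (∫ t, t ^ m ∂symbolDistribution A B)) := by
    simp only [integral_spectralDistribution, hint (continuous_pow m).continuousOn]
    simpa [cosCoeff] using tendsto_jacobiTrace_pow hC hD ha hb hA hB m
  simpa only [integral_spectralDistribution, hint hφ] using
    tendsto_integral_of_tendsto_moments hspec hsymb hmoments hφ

/-- Kuijlaars–Serra Capizzano: if `|a_j^k| ≤ 1`, `0 < b_j^k ≤ 1` and the entries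
converge in measure to bounded measurable `a, b : [0,1] → [0,1]`, then
`lim (1/k)·Trace[φ(J)] = (1/π) ∫_0^1 ∫_0^π φ(a(x)+2b(x) cos y) dy dx` for every `φ ∈ C[-3,3]`. -/
theorem trace_formula_ksc (a b : ℕ → ℕ → ℝ)
    (ha1 : ∀ k : ℕ, ∀ j < k, |a k j| ≤ 1)
    (hb1 : ∀ k : ℕ, ∀ j < k, 0 < b k j ∧ b k j ≤ 1)
    (A B : ℝ → ℝ) (hAmeas : Measurable A) (hBmeas : Measurable B)
    (hA1 : ∀ s ∈ Set.Icc (0 : ℝ) 1, A s ∈ Set.Icc (0 : ℝ) 1)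
    (hB1 : ∀ s ∈ Set.Icc (0 : ℝ) 1, B s ∈ Set.Icc (0 : ℝ) 1)
    (hconvA : ∀ ε : ℝ, 0 < ε →
      Filter.Tendsto
        (fun k : ℕ =>
          MeasureTheory.volume
            {s : ℝ | s ∈ Set.Icc (0 : ℝ) 1 ∧ ε ≤ |a k (⌈s * (k : ℝ)⌉₊ - 1) - A s|})
        Filter.atTop (nhds 0))
    (hconvB : ∀ ε : ℝ, 0 < ε →
      Filter.Tendsto
        (fun k : ℕ =>
          MeasureTheory.volume
            {s : ℝ | s ∈ Set.Icc (0 : ℝ) 1 ∧ ε ≤ |b k (⌈s * (k : ℝ)⌉₊ - 1) - B s|})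
        Filter.atTop (nhds 0))
    (φ : ℝ → ℝ) (hφ : ContinuousOn φ (Set.Icc (-3 : ℝ) 3)) :
    Filter.Tendsto (fun k : ℕ => (1 / (k : ℝ)) * jacobiTrace k (a k) (b k) φ)
      Filter.atTop
      (nhds ((1 / Real.pi) *
        ∫ x in (0 : ℝ)..1, ∫ y in (0 : ℝ)..Real.pi, φ (A x + 2 * B x * Real.cos y))) :=
  trace_formula_ksc_general (C := 1) (D := 1) ha1
    (fun k j hj => abs_le.2 ⟨by linarith [(hb1 k j (by lia)).1], (hb1 k j (by lia)).2⟩)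
    ((tendstoInMeasure_restrict_iff measurableSet_Icc).2 hconvA)
    ((tendstoInMeasure_restrict_iff measurableSet_Icc).2 hconvB)
    (hφ.mono (Set.Icc_subset_Icc (by norm_num) (by norm_num)))
end
end

section
/- Let (a^k)_k, (b^k)_k be sequences of vectors a^k, b^k ∈ ℝ^k and let r : (0,∞) → (0,∞) be such that the normalized sequences (a^k/r(k))_k and (b^k/r(k))_k belong to the class 𝒮. Suppose in addition that (a^k/r(k), b^k/r(k))_k is μ-distributed for some probability measure μ on I² = [0,1]². Then for every continuous function φ on [−3,3], lim_{k→∞} (1/k)·Trace[φ(J(a^k/r(k), b^k/r(k)))] = (1/π) ∫_{I²} ∫_0^π φ(x + 2y·cos t) dt dμ(x,y). -/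
open Filter MeasureTheory

noncomputable section

/-! For constant entries `x` and `y`, the plane wave `j ↦ e^{ijt}` is, away from the two ends, an
eigenvector of the Jacobi matrix `J` with eigenvalue `x + 2y cos t`. For slowly varying entries, `J`
still acts on it, up to an `ℓ¹` error of the order of the total variation of the entries, as
multiplication by the sequence `aᵢ + 2bᵢ cos t`, and hence `Jⁿ` acts as multiplication by
`(aᵢ + 2bᵢ cos t)ⁿ`. Since `Re e^{i(l-j)t} = cos((l-j)t)` has mean zero on `[0, π]` for `l ≠ j`,
averaging `Re ∑ⱼ conj(e^{ijt}) (Jⁿ e^{i·t})ⱼ` over `t ∈ [0, π]` gives the trace of `Jⁿ`. The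
Weierstrass approximation theorem passes from powers to continuous functions. -/

open scoped InnerProductSpace Matrix.Module

section ApproximateEigenvector

variable {ι : Type*} [Fintype ι]

/-- The sum of the absolute values of the entries of the commutator of `M` with the diagonal
matrix of `p`; it measures how far `p` is from being constant along `M`. -/
def commutatorWeight (M : Matrix ι ι ℝ) (p : ι → ℝ) : ℝ :=
  ∑ i, ∑ j, |M i j| * |p j - p i|

theorem commutatorWeight_pow_le (M : Matrix ι ι ℝ) {p : ι → ℝ} {C : ℝ} (hp : ∀ i, |p i| ≤ C)
    (n : ℕ) :
    commutatorWeight M (fun i => p i ^ n) ≤ n * C ^ (n - 1) * commutatorWeight M p := by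
  simp only [commutatorWeight, Finset.mul_sum]
  refine Finset.sum_le_sum fun i _ => Finset.sum_le_sum fun j _ => ?_
  have hpow : |p j ^ n - p i ^ n| ≤ |p j - p i| * n * C ^ (n - 1) :=
    (abs_pow_sub_pow_le _ _ n).trans <| by
      gcongr
      exact max_le (hp j) (hp i)
  calc |M i j| * |p j ^ n - p i ^ n|
      ≤ |M i j| * (|p j - p i| * n * C ^ (n - 1)) := by gcongr
    _ = n * C ^ (n - 1) * (|M i j| * |p j - p i|) := by ring

variable {E : Type*} [DecidableEq ι] [NormedAddCommGroup E]

section NormedSpace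

variable [NormedSpace ℝ E]

theorem sum_norm_smul_le_of_col_sum_le {M : Matrix ι ι ℝ} {C : ℝ}
    (hM : ∀ j, ∑ i, |M i j| ≤ C) (x : ι → E) :
    ∑ i, ‖(M • x) i‖ ≤ C * ∑ j, ‖x j‖ :=
  calc ∑ i, ‖(M • x) i‖
      ≤ ∑ i, ∑ j, |M i j| * ‖x j‖ := by
        refine Finset.sum_le_sum fun i _ => ?_
        rw [Matrix.Module.smul_apply]
        simpa only [norm_smul, Real.norm_eq_abs] using
          norm_sum_le Finset.univ fun j => M i j • x j
    _ = ∑ j, (∑ i, |M i j|) * ‖x j‖ := by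
        rw [Finset.sum_comm]
        simp only [Finset.sum_mul]
    _ ≤ ∑ j, C * ‖x j‖ := by gcongr; exact hM _
    _ = C * ∑ j, ‖x j‖ := (Finset.mul_sum ..).symm

theorem sum_norm_smul_smul_sub_le_commutatorWeight (M : Matrix ι ι ℝ) (p : ι → ℝ) {x : ι → E}
    (hx : ∀ j, ‖x j‖ ≤ 1) :
    ∑ i, ‖(M • fun j => p j • x j) i - p i • (M • x) i‖ ≤ commutatorWeight M p := by
  refine Finset.sum_le_sum fun i _ => ?_
  have hcomm : (M • fun j => p j • x j) i - p i • (M • x) i =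
      ∑ j, (M i j * (p j - p i)) • x j := by
    simp only [Matrix.Module.smul_apply, Finset.smul_sum, ← Finset.sum_sub_distrib, smul_smul,
      ← sub_smul]
    refine Finset.sum_congr rfl fun j _ => ?_
    congr 1
    ring
  rw [hcomm]
  refine (norm_sum_le _ _).trans (Finset.sum_le_sum fun j _ => ?_)
  rw [norm_smul, Real.norm_eq_abs, abs_mul]
  exact mul_le_of_le_one_right (by positivity) (hx j)

theorem sum_norm_pow_succ_smul_sub_le {M : Matrix ι ι ℝ} {p : ι → ℝ} {x : ι → E} {C : ℝ}
    (hM : ∀ j, ∑ i, |M i j| ≤ C) (hp : ∀ i, |p i| ≤ C) (hx : ∀ j, ‖x j‖ ≤ 1) (n : ℕ) :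
    ∑ i, ‖(M ^ (n + 1) • x) i - p i ^ (n + 1) • x i‖ ≤
      C * ∑ i, ‖(M ^ n • x) i - p i ^ n • x i‖ + n * C ^ (n - 1) * commutatorWeight M p +
        C ^ n * ∑ i, ‖(M • x) i - p i • x i‖ := by
  set y : ι → E := fun i => p i ^ n • x i
  have hsplit (i : ι) : (M ^ (n + 1) • x) i - p i ^ (n + 1) • x i =
      (M • (M ^ n • x - y)) i + ((M • y) i - p i ^ n • (M • x) i) +
        p i ^ n • ((M • x) i - p i • x i) := by
    rw [pow_succ' M, mul_smul M, pow_succ (p i), mul_smul (p i ^ n), smul_sub M, Pi.sub_apply,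
      smul_sub (p i ^ n)]
    abel
  have hresidual : ∑ i, ‖p i ^ n • ((M • x) i - p i • x i)‖ ≤
      C ^ n * ∑ i, ‖(M • x) i - p i • x i‖ := by
    rw [Finset.mul_sum]
    refine Finset.sum_le_sum fun i _ => ?_
    rw [norm_smul, norm_pow, Real.norm_eq_abs]
    gcongr
    exact hp i
  calc ∑ i, ‖(M ^ (n + 1) • x) i - p i ^ (n + 1) • x i‖
      ≤ ∑ i, (‖(M • (M ^ n • x - y)) i‖ + ‖(M • y) i - p i ^ n • (M • x) i‖ +
          ‖p i ^ n • ((M • x) i - p i • x i)‖) :=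
        Finset.sum_le_sum fun i _ => hsplit i ▸ norm_add₃_le
    _ ≤ _ := by
        simp only [Finset.sum_add_distrib]
        exact add_le_add_three (sum_norm_smul_le_of_col_sum_le hM _)
          ((sum_norm_smul_smul_sub_le_commutatorWeight M (fun i => p i ^ n) hx).trans
            (commutatorWeight_pow_le M hp n)) hresidual

theorem sum_norm_pow_smul_sub_le {M : Matrix ι ι ℝ} {p : ι → ℝ} {x : ι → E} {C : ℝ}
    (hM : ∀ j, ∑ i, |M i j| ≤ C) (hp : ∀ i, |p i| ≤ C) (hx : ∀ j, ‖x j‖ ≤ 1) (n : ℕ) :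
    ∑ i, ‖(M ^ n • x) i - p i ^ n • x i‖ ≤
      n * C ^ (n - 1) * ∑ i, ‖(M • x) i - p i • x i‖ +
        n.choose 2 * C ^ (n - 2) * commutatorWeight M p := by
  cases isEmpty_or_nonempty ι with
  | inl _ => simp [commutatorWeight]
  | inr hι =>
    obtain ⟨i₀⟩ := hι
    have hC : 0 ≤ C := (abs_nonneg _).trans (hp i₀)
    induction n with
    | zero => simp only [pow_zero, one_smul, sub_self, norm_zero, Finset.sum_const_zero,
        Nat.cast_zero, zero_mul, Nat.choose_zero_succ, add_zero, le_refl]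
    | succ n ih =>
      have hpow (d : ℕ) : C * (n.choose d * C ^ (n - d)) = n.choose d * C ^ (n + 1 - d) := by
        obtain hnd | hdn := lt_or_ge n d
        · simp only [Nat.choose_eq_zero_of_lt hnd, Nat.cast_zero, zero_mul, mul_zero]
        · rw [Nat.sub_add_comm hdn, pow_succ]
          ring
      have hone := hpow 1
      rw [Nat.choose_one_right, Nat.add_sub_cancel] at hone
      have hchoose : ((n + 1).choose 2 : ℝ) = n + n.choose 2 := by
        rw [Nat.choose_succ_succ' n 1, Nat.choose_one_right, Nat.cast_add]
      set R := ∑ i, ‖(M • x) i - p i • x i‖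
      set W := commutatorWeight M p
      calc ∑ i, ‖(M ^ (n + 1) • x) i - p i ^ (n + 1) • x i‖
          ≤ C * ∑ i, ‖(M ^ n • x) i - p i ^ n • x i‖ + n * C ^ (n - 1) * W + C ^ n * R :=
            sum_norm_pow_succ_smul_sub_le hM hp hx n
        _ ≤ C * (n * C ^ (n - 1) * R + n.choose 2 * C ^ (n - 2) * W) + n * C ^ (n - 1) * W +
              C ^ n * R := by gcongr
        _ = (C * (n * C ^ (n - 1)) + C ^ n) * R +
              (C * (n.choose 2 * C ^ (n - 2)) + n * C ^ (n - 1)) * W := by ring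
        _ = (n + 1 : ℕ) * C ^ (n + 1 - 1) * R + (n + 1).choose 2 * C ^ (n + 1 - 2) * W := by
            rw [hone, hpow, hchoose, Nat.add_sub_cancel, show n + 1 - 2 = n - 1 by omega,
              Nat.cast_succ]
            ring

end NormedSpace

theorem abs_sum_inner_smul_sub_le [InnerProductSpace ℝ E] (M : Matrix ι ι ℝ) (q : ι → ℝ)
    {x : ι → E} (hx : ∀ i, ‖x i‖ = 1) :
    |∑ i, ⟪x i, (M • x) i⟫_ℝ - ∑ i, q i| ≤ ∑ i, ‖(M • x) i - q i • x i‖ := by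
  rw [← Finset.sum_sub_distrib]
  refine (Finset.abs_sum_le_sum_abs _ _).trans (Finset.sum_le_sum fun i _ => ?_)
  have hinner : ⟪x i, (M • x) i⟫_ℝ - q i = ⟪x i, (M • x) i - q i • x i⟫_ℝ := by
    rw [inner_sub_right, real_inner_smul_right, real_inner_self_eq_norm_sq, hx, one_pow, mul_one]
  simpa only [hinner, hx, one_mul] using abs_real_inner_le_norm (x i) ((M • x) i - q i • x i)

end ApproximateEigenvector

section Eigenvalues

variable {ι : Type*} [Fintype ι] [DecidableEq ι] {M : Matrix ι ι ℝ}

theorem abs_eigenvalues_le_of_row_sum_le (hM : M.IsHermitian) {C : ℝ}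
    (hC : ∀ i, ∑ j, |M i j| ≤ C) (i : ι) : |hM.eigenvalues i| ≤ C := by
  have heig : Module.End.HasEigenvalue (Matrix.toLin' M) (hM.eigenvalues i) := by
    rw [Module.End.hasEigenvalue_iff_mem_spectrum, Matrix.spectrum_toLin']
    exact hM.eigenvalues_mem_spectrum_real i
  obtain ⟨l, hl⟩ := eigenvalue_mem_ball heig
  calc |hM.eigenvalues i| ≤ |M l l| + |hM.eigenvalues i - M l l| := by
        simpa using abs_add_le (M l l) (hM.eigenvalues i - M l l)
    _ ≤ |M l l| + ∑ j ∈ Finset.univ.erase l, |M l j| := by gcongr; exact hl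
    _ = ∑ j, |M l j| := Finset.add_sum_erase _ (fun j => |M l j|) (Finset.mem_univ l)
    _ ≤ C := hC l

theorem trace_pow_eq_sum_eigenvalues_pow (hM : M.IsHermitian) (n : ℕ) :
    (M ^ n).trace = ∑ i, hM.eigenvalues i ^ n := by
  conv_lhs => rw [hM.spectral_theorem, ← map_pow, Unitary.conjStarAlgAut_apply,
    Matrix.trace_mul_comm, ← mul_assoc]
  simp [Matrix.diagonal_pow, Matrix.trace_diagonal]

end Eigenvalues

section JacobiMatrix

/-- The total variation `∑ᵢ |aᵢ₊₁ - aᵢ|` of the first `k` entries of `a`. -/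
def discreteVariation (k : ℕ) (a : ℕ → ℝ) : ℝ :=
  ∑ i ∈ Finset.range (k - 1), |a (i + 1) - a i|

theorem jacobiMatrix_apply_eq_add (k : ℕ) (a b : ℕ → ℝ) (i j : Fin k) :
    jacobiMatrix k a b i j = (if (i : ℕ) = j then a i else 0) +
      ((if (i : ℕ) + 1 = j then b i else 0) + (if (i : ℕ) = j + 1 then b j else 0)) := by
  simp only [jacobiMatrix, Matrix.of_apply]
  split_ifs <;> first | omega | simp only [add_zero, zero_add]

theorem abs_jacobiMatrix_apply (k : ℕ) (a b : ℕ → ℝ) (i j : Fin k) :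
    |jacobiMatrix k a b i j| = jacobiMatrix k (fun l => |a l|) (fun l => |b l|) i j := by
  simp only [jacobiMatrix, Matrix.of_apply]
  split_ifs <;> simp only [abs_zero]

theorem sum_jacobiMatrix_smul {E : Type*} [AddCommGroup E] [Module ℝ E] (k : ℕ) (a b : ℕ → ℝ)
    (x : ℕ → E) (i : Fin k) :
    ∑ j : Fin k, jacobiMatrix k a b i j • x j = a i • x i +
      ((if (i : ℕ) + 1 < k then b i • x (i + 1) else 0) +
        (if (i : ℕ) = 0 then 0 else b (i - 1) • x (i - 1))) := by
  have hpred (j : ℕ) : (i : ℕ) = j + 1 ↔ (i : ℕ) ≠ 0 ∧ (i : ℕ) - 1 = j := by omega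
  have hpred_lt : (i : ℕ) - 1 < k := by omega
  simp only [jacobiMatrix_apply_eq_add, add_smul, ite_smul, zero_smul, Finset.sum_add_distrib,
    hpred, ite_and, Fin.sum_univ_eq_sum_range (fun j => if (i : ℕ) = j then a i • x j else 0),
    Fin.sum_univ_eq_sum_range (fun j => if (i : ℕ) + 1 = j then b i • x j else 0),
    Fin.sum_univ_eq_sum_range (fun j => if (i : ℕ) - 1 = j then b j • x j else 0),
    Finset.sum_ite_irrel, Finset.sum_ite_eq, Finset.sum_const_zero, Finset.mem_range, i.2,
    hpred_lt, if_true, ite_not]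

theorem sum_abs_jacobiMatrix_mul (k : ℕ) (a b g : ℕ → ℝ) (i : Fin k) :
    ∑ j : Fin k, |jacobiMatrix k a b i j| * g j = |a i| * g i +
      ((if (i : ℕ) + 1 < k then |b i| * g (i + 1) else 0) +
        (if (i : ℕ) = 0 then 0 else |b (i - 1)| * g (i - 1))) := by
  simpa only [abs_jacobiMatrix_apply, smul_eq_mul] using
    sum_jacobiMatrix_smul k (fun l => |a l|) (fun l => |b l|) g i

theorem sum_fin_ite_succ_lt (k : ℕ) (g : ℕ → ℝ) :
    ∑ i : Fin k, (if (i : ℕ) + 1 < k then g i else 0) = ∑ i ∈ Finset.range (k - 1), g i := by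
  rw [Fin.sum_univ_eq_sum_range (fun i => if i + 1 < k then g i else 0), ← Finset.sum_filter]
  congr 1
  ext i
  simp only [Finset.mem_filter, Finset.mem_range]
  omega

theorem sum_fin_ite_eq_zero_pred (k : ℕ) (g : ℕ → ℝ) :
    ∑ i : Fin k, (if (i : ℕ) = 0 then 0 else g (i - 1)) = ∑ i ∈ Finset.range (k - 1), g i := by
  obtain _ | k := k
  · rfl
  · rw [Fin.sum_univ_succ]
    simpa using Fin.sum_univ_eq_sum_range g k

variable {k : ℕ} {a b : ℕ → ℝ} {A B : ℝ}

theorem sum_abs_jacobiMatrix_le (ha : ∀ i < k, |a i| ≤ A) (hb : ∀ i < k, |b i| ≤ B) (i : Fin k) :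
    ∑ j, |jacobiMatrix k a b i j| ≤ A + 2 * B := by
  have hai := ha i i.2
  have hbi := hb i i.2
  have hbi_pred := hb (i - 1) (by omega)
  have hB : 0 ≤ B := (abs_nonneg _).trans hbi
  have hsum := sum_abs_jacobiMatrix_mul k a b (fun _ => 1) i
  simp only [mul_one] at hsum
  rw [hsum]
  split_ifs <;> linarith

theorem sum_abs_jacobiMatrix_col_le (ha : ∀ i < k, |a i| ≤ A) (hb : ∀ i < k, |b i| ≤ B)
    (j : Fin k) : ∑ i, |jacobiMatrix k a b i j| ≤ A + 2 * B := by
  convert sum_abs_jacobiMatrix_le ha hb j using 3 with i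
  exact ((jacobiMatrix_isHermitian k a b).apply i j).symm

theorem commutatorWeight_jacobiMatrix_le (a : ℕ → ℝ) (hb : ∀ i < k, |b i| ≤ B) (p : ℕ → ℝ) :
    commutatorWeight (jacobiMatrix k a b) (fun i => p i) ≤ 2 * B * discreteVariation k p := by
  have hrow (i : Fin k) : ∑ j : Fin k, |jacobiMatrix k a b i j| * |p j - p i| =
      (if (i : ℕ) + 1 < k then |b i| * |p (i + 1) - p i| else 0) +
        (if (i : ℕ) = 0 then 0 else |b (i - 1)| * |p (i - 1 + 1) - p (i - 1)|) := by
    rw [sum_abs_jacobiMatrix_mul k a b (fun j => |p j - p i|) i, sub_self, abs_zero, mul_zero,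
      zero_add]
    congr 1
    split_ifs with hi
    · rfl
    · rw [Nat.sub_add_cancel (Nat.one_le_iff_ne_zero.2 hi), abs_sub_comm]
  simp only [commutatorWeight, hrow, Finset.sum_add_distrib]
  rw [sum_fin_ite_succ_lt k (fun i => |b i| * |p (i + 1) - p i|),
    sum_fin_ite_eq_zero_pred k (fun i => |b i| * |p (i + 1) - p i|), ← two_mul, mul_assoc,
    discreteVariation, Finset.mul_sum _ _ B]
  gcongr with i hi
  exact hb i (by have := Finset.mem_range.1 hi; omega)

theorem sum_fin_ite_eq_le (k l : ℕ) {c : ℝ} (hc : 0 ≤ c) :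
    ∑ i : Fin k, (if (i : ℕ) = l then c else 0) ≤ c := by
  rw [Fin.sum_univ_eq_sum_range (fun i => if i = l then c else 0), Finset.sum_ite_eq']
  split_ifs
  exacts [le_rfl, hc]

section Residual

variable {E : Type*} [NormedAddCommGroup E] [NormedSpace ℝ E] {e : ℕ → E} {c : ℝ}

/-- Away from the two ends of the matrix, the residual at `i` is `(bᵢ₋₁ - bᵢ) eᵢ`. The
index of `e` is shifted by one so that `e 0` sits just before the first row. -/
theorem norm_jacobiMatrix_smul_sub_le (k : ℕ) (a b : ℕ → ℝ) (he : ∀ i, ‖e i‖ ≤ 1)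
    (hrec : ∀ i, e (i + 2) + e i = (2 * c) • e (i + 1)) (i : Fin k) :
    ‖(jacobiMatrix k a b • fun j : Fin k => e (j + 1)) i - (a i + 2 * b i * c) • e (i + 1)‖ ≤
      (if (i : ℕ) = 0 then 0 else |b (i - 1 + 1) - b (i - 1)|) +
        (if (i : ℕ) = 0 then |b 0| else 0) + (if (i : ℕ) = k - 1 then |b (k - 1)| else 0) := by
  have hnorm (s : ℝ) (j : ℕ) : ‖s • e j‖ ≤ |s| := by
    rw [norm_smul, Real.norm_eq_abs]
    exact mul_le_of_le_one_right (abs_nonneg s) (he j)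
  have hsymbol : (a i + 2 * b i * c) • e (i + 1) =
      a i • e (i + 1) + (b i • e (i + 2) + b i • e i) := by
    rw [← smul_add, hrec]
    module
  have hlower : ‖(if (i : ℕ) = 0 then 0 else b (i - 1) • e (i - 1 + 1)) - b i • e i‖ ≤
      (if (i : ℕ) = 0 then 0 else |b (i - 1 + 1) - b (i - 1)|) +
        (if (i : ℕ) = 0 then |b 0| else 0) := by
    split_ifs with hi
    · simpa only [hi, zero_sub, norm_neg, zero_add] using hnorm (b 0) 0
    · rw [Nat.sub_add_cancel (Nat.one_le_iff_ne_zero.2 hi), ← sub_smul, abs_sub_comm, add_zero]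
      exact hnorm _ i
  have hupper : ‖(if (i : ℕ) + 1 < k then b i • e (i + 1 + 1) else 0) - b i • e (i + 2)‖ ≤
      if (i : ℕ) = k - 1 then |b (k - 1)| else 0 := by
    split_ifs with hlt hlast hlast
    · omega
    · rw [sub_self, norm_zero]
    · simpa only [← hlast, zero_sub, norm_neg] using hnorm (b i) (i + 2)
    · omega
  rw [Matrix.Module.smul_apply, sum_jacobiMatrix_smul k a b (fun j => e (j + 1)) i, hsymbol,
    add_sub_add_left_eq_sub, add_sub_add_comm, add_comm (_ - _)]
  exact (norm_add_le _ _).trans (add_le_add hlower hupper)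

theorem sum_norm_jacobiMatrix_smul_sub_le (k : ℕ) (a b : ℕ → ℝ) (he : ∀ i, ‖e i‖ ≤ 1)
    (hrec : ∀ i, e (i + 2) + e i = (2 * c) • e (i + 1)) :
    ∑ i : Fin k, ‖(jacobiMatrix k a b • fun j : Fin k => e (j + 1)) i -
        (a i + 2 * b i * c) • e (i + 1)‖ ≤
      discreteVariation k b + |b 0| + |b (k - 1)| := by
  refine (Finset.sum_le_sum fun i _ => norm_jacobiMatrix_smul_sub_le k a b he hrec i).trans ?_
  rw [Finset.sum_add_distrib, Finset.sum_add_distrib,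
    sum_fin_ite_eq_zero_pred k (fun i => |b (i + 1) - b i|)]
  exact add_le_add_three le_rfl (sum_fin_ite_eq_le k 0 (abs_nonneg _))
    (sum_fin_ite_eq_le k (k - 1) (abs_nonneg _))

end Residual

end JacobiMatrix

section PlaneWave

/-- The plane wave `j ↦ e^{ijt}`, an approximate eigenvector of every Jacobi matrix with slowly
varying entries. -/
def planeWave (t : ℝ) (j : ℕ) : ℂ :=
  Complex.exp ((j * t : ℝ) * Complex.I)

theorem norm_planeWave (t : ℝ) (j : ℕ) : ‖planeWave t j‖ = 1 :=
  Complex.norm_exp_ofReal_mul_I _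

theorem planeWave_add_two_add_planeWave (t : ℝ) (j : ℕ) :
    planeWave t (j + 2) + planeWave t j = (2 * Real.cos t) • planeWave t (j + 1) := by
  simp only [planeWave, Complex.real_smul, Complex.ofReal_mul, Complex.ofReal_ofNat,
    Complex.ofReal_cos, Complex.two_cos, add_mul, ← Complex.exp_add]
  congr 2 <;> push_cast <;> ring

theorem inner_planeWave (t : ℝ) (i j : ℕ) :
    ⟪planeWave t i, planeWave t j⟫_ℝ = Real.cos ((j - i) * t) := by
  rw [Complex.inner, planeWave, planeWave, ← Complex.exp_conj, ← Complex.exp_add, map_mul,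
    Complex.conj_ofReal, Complex.conj_I, ← Complex.exp_ofReal_mul_I_re]
  congr 2
  push_cast
  ring

theorem integral_cos_int_mul (z : ℤ) :
    ∫ t in (0 : ℝ)..Real.pi, Real.cos (z * t) = if z = 0 then Real.pi else 0 := by
  split_ifs with hz
  · simp only [hz, Int.cast_zero, zero_mul, Real.cos_zero, integral_one, sub_zero]
  · rw [intervalIntegral.integral_comp_mul_left Real.cos (Int.cast_ne_zero.2 hz), integral_cos,
      Real.sin_int_mul_pi, mul_zero, Real.sin_zero, sub_zero, smul_zero]

theorem sum_inner_smul_planeWave {k : ℕ} (M : Matrix (Fin k) (Fin k) ℝ) (t : ℝ) :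
    ∑ i : Fin k, ⟪planeWave t (i + 1), (M • fun j : Fin k => planeWave t (j + 1)) i⟫_ℝ =
      ∑ i : Fin k, ∑ j : Fin k, M i j * Real.cos (((j : ℤ) - i : ℤ) * t) := by
  simp only [Matrix.Module.smul_apply, inner_sum, real_inner_smul_right, inner_planeWave]
  push_cast
  simp only [add_sub_add_right_eq_sub]

theorem continuous_sum_inner_smul_planeWave {k : ℕ} (M : Matrix (Fin k) (Fin k) ℝ) :
    Continuous fun t =>
      ∑ i : Fin k, ⟪planeWave t (i + 1), (M • fun j : Fin k => planeWave t (j + 1)) i⟫_ℝ := by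
  simp only [sum_inner_smul_planeWave]
  fun_prop

theorem integral_sum_inner_smul_planeWave {k : ℕ} (M : Matrix (Fin k) (Fin k) ℝ) :
    ∫ t in (0 : ℝ)..Real.pi,
        ∑ i : Fin k, ⟪planeWave t (i + 1), (M • fun j : Fin k => planeWave t (j + 1)) i⟫_ℝ =
      Real.pi * M.trace := by
  have hterm (i j : Fin k) :
      ∫ t in (0 : ℝ)..Real.pi, M i j * Real.cos (((j : ℤ) - i : ℤ) * t) =
        if i = j then Real.pi * M i i else 0 := by
    rw [intervalIntegral.integral_const_mul, integral_cos_int_mul]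
    obtain rfl | hij := eq_or_ne i j
    · simp only [sub_self, if_true, mul_comm]
    · rw [if_neg (by omega), if_neg hij, mul_zero]
  have hrow (i : Fin k) :
      ∫ t in (0 : ℝ)..Real.pi, ∑ j : Fin k, M i j * Real.cos (((j : ℤ) - i : ℤ) * t) =
        Real.pi * M i i := by
    rw [intervalIntegral.integral_finsetSum]
    · simp only [hterm, Finset.sum_ite_eq, Finset.mem_univ, if_true]
    · exact fun j _ => Continuous.intervalIntegrable (by fun_prop) _ _
  simp only [sum_inner_smul_planeWave]
  rw [intervalIntegral.integral_finsetSum]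
  · simp only [hrow, ← Finset.mul_sum, Matrix.trace, Matrix.diag_apply]
  · exact fun i _ => Continuous.intervalIntegrable (by fun_prop) _ _

end PlaneWave

section ArcsineMean

variable {A B x y c : ℝ} {φ : ℝ → ℝ}

theorem abs_add_two_mul_mul_le (hx : |x| ≤ A) (hy : |y| ≤ B) (hc : |c| ≤ 1) :
    |x + 2 * y * c| ≤ A + 2 * B :=
  calc |x + 2 * y * c| ≤ |x| + 2 * |y| * |c| := by
        simpa only [abs_mul, Nat.abs_ofNat] using abs_add_le x (2 * y * c)
    _ ≤ |x| + 2 * |y| := by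
        gcongr |x| + ?_
        exact mul_le_of_le_one_right (by positivity) hc
    _ ≤ A + 2 * B := by gcongr

theorem add_two_mul_mul_cos_mem_Icc (hx : |x| ≤ A) (hy : |y| ≤ B) (t : ℝ) :
    x + 2 * y * Real.cos t ∈ Set.Icc (-(A + 2 * B)) (A + 2 * B) :=
  abs_le.1 (abs_add_two_mul_mul_le hx hy (Real.abs_cos_le_one t))

/-- The mean of `φ` against the arcsine law on `[x - 2y, x + 2y]`, which is the limiting spectral
distribution of the Jacobi matrices with constant diagonal `x` and constant off-diagonal `y`. -/
def arcsineMean (φ : ℝ → ℝ) (x y : ℝ) : ℝ :=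
  (1 / Real.pi) * ∫ t in (0 : ℝ)..Real.pi, φ (x + 2 * y * Real.cos t)

theorem continuous_comp_add_two_mul_mul_cos
    (hφ : ContinuousOn φ (Set.Icc (-(A + 2 * B)) (A + 2 * B))) (hx : |x| ≤ A) (hy : |y| ≤ B) :
    Continuous fun t => φ (x + 2 * y * Real.cos t) :=
  hφ.comp_continuous (by fun_prop) (add_two_mul_mul_cos_mem_Icc hx hy)

theorem arcsineMean_add {φ₁ φ₂ : ℝ → ℝ}
    (hφ₁ : ContinuousOn φ₁ (Set.Icc (-(A + 2 * B)) (A + 2 * B)))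
    (hφ₂ : ContinuousOn φ₂ (Set.Icc (-(A + 2 * B)) (A + 2 * B))) (hx : |x| ≤ A) (hy : |y| ≤ B) :
    arcsineMean (φ₁ + φ₂) x y = arcsineMean φ₁ x y + arcsineMean φ₂ x y := by
  simp only [arcsineMean, Pi.add_apply]
  rw [intervalIntegral.integral_add, mul_add]
  · exact (continuous_comp_add_two_mul_mul_cos hφ₁ hx hy).intervalIntegrable _ _
  · exact (continuous_comp_add_two_mul_mul_cos hφ₂ hx hy).intervalIntegrable _ _

theorem arcsineMean_const_smul (s : ℝ) (φ : ℝ → ℝ) (x y : ℝ) :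
    arcsineMean (s • φ) x y = s * arcsineMean φ x y := by
  simp only [arcsineMean, Pi.smul_apply, smul_eq_mul, intervalIntegral.integral_const_mul]
  ring

theorem abs_integral_zero_pi_le {f : ℝ → ℝ} {K : ℝ} (hf : ∀ t, |f t| ≤ K) :
    |∫ t in (0 : ℝ)..Real.pi, f t| ≤ Real.pi * K := by
  have hbound := intervalIntegral.norm_integral_le_of_norm_le_const (a := 0) (b := Real.pi)
    fun t _ => (Real.norm_eq_abs (f t)).trans_le (hf t)
  rwa [sub_zero, abs_of_pos Real.pi_pos, mul_comm, Real.norm_eq_abs] at hbound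

theorem abs_arcsineMean_le {ε : ℝ}
    (hφ : ∀ z ∈ Set.Icc (-(A + 2 * B)) (A + 2 * B), |φ z| ≤ ε) (hx : |x| ≤ A) (hy : |y| ≤ B) :
    |arcsineMean φ x y| ≤ ε := by
  rw [arcsineMean, abs_mul, abs_of_pos (one_div_pos.2 Real.pi_pos), one_div_mul_eq_div,
    div_le_iff₀' Real.pi_pos]
  exact abs_integral_zero_pi_le fun t => hφ _ (add_two_mul_mul_cos_mem_Icc hx hy t)

theorem continuousOn_arcsineMean (hφ : ContinuousOn φ (Set.Icc (-(A + 2 * B)) (A + 2 * B))) :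
    ContinuousOn (fun p : ℝ × ℝ => arcsineMean φ p.1 p.2)
      (Set.Icc (-A) A ×ˢ Set.Icc (-B) B) := by
  rw [continuousOn_iff_continuous_domRestrict]
  have huncurry : Continuous fun q : (Set.Icc (-A) A ×ˢ Set.Icc (-B) B : Set (ℝ × ℝ)) × ℝ =>
      φ (q.1.1.1 + 2 * q.1.1.2 * Real.cos q.2) :=
    hφ.comp_continuous (by fun_prop) fun q =>
      add_two_mul_mul_cos_mem_Icc (abs_le.2 q.1.2.1) (abs_le.2 q.1.2.2) q.2
  exact continuous_const.mul
    (intervalIntegral.continuous_parametric_intervalIntegral_of_continuous' huncurry 0 Real.pi)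

end ArcsineMean

section SpectralDiscrepancy

/-- The error made in replacing the trace of `φ (J a b)` by the sum of the arcsine means of `φ` at
the pairs of entries `(aᵢ, bᵢ)`. -/
def spectralDiscrepancy (k : ℕ) (a b : ℕ → ℝ) (φ : ℝ → ℝ) : ℝ :=
  jacobiTrace k a b φ - ∑ i ∈ Finset.range k, arcsineMean φ (a i) (b i)

variable {k : ℕ} {a b : ℕ → ℝ} {A B : ℝ}

theorem spectralDiscrepancy_add (ha : ∀ i < k, |a i| ≤ A) (hb : ∀ i < k, |b i| ≤ B)
    {φ₁ φ₂ : ℝ → ℝ} (hφ₁ : ContinuousOn φ₁ (Set.Icc (-(A + 2 * B)) (A + 2 * B)))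
    (hφ₂ : ContinuousOn φ₂ (Set.Icc (-(A + 2 * B)) (A + 2 * B))) :
    spectralDiscrepancy k a b (φ₁ + φ₂) =
      spectralDiscrepancy k a b φ₁ + spectralDiscrepancy k a b φ₂ := by
  have hmean (i : ℕ) (hi : i ∈ Finset.range k) :=
    arcsineMean_add hφ₁ hφ₂ (ha i (Finset.mem_range.1 hi)) (hb i (Finset.mem_range.1 hi))
  simp only [spectralDiscrepancy, jacobiTrace, Finset.sum_congr rfl hmean, Pi.add_apply,
    Finset.sum_add_distrib]
  ring

theorem spectralDiscrepancy_const_smul (k : ℕ) (a b : ℕ → ℝ) (s : ℝ) (φ : ℝ → ℝ) :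
    spectralDiscrepancy k a b (s • φ) = s * spectralDiscrepancy k a b φ := by
  simp only [spectralDiscrepancy, jacobiTrace, arcsineMean_const_smul, Pi.smul_apply, smul_eq_mul,
    ← Finset.mul_sum, mul_sub]

theorem abs_spectralDiscrepancy_le (ha : ∀ i < k, |a i| ≤ A) (hb : ∀ i < k, |b i| ≤ B)
    {φ : ℝ → ℝ} {ε : ℝ} (hφ : ∀ z ∈ Set.Icc (-(A + 2 * B)) (A + 2 * B), |φ z| ≤ ε) :
    |spectralDiscrepancy k a b φ| ≤ 2 * ε * k := by
  have htrace : |jacobiTrace k a b φ| ≤ k * ε := by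
    refine (Finset.abs_sum_le_sum_abs _ _).trans ?_
    simpa using Finset.sum_le_card_nsmul Finset.univ _ ε fun i _ =>
      hφ _ (abs_le.1 (abs_eigenvalues_le_of_row_sum_le (jacobiMatrix_isHermitian k a b)
        (sum_abs_jacobiMatrix_le ha hb) i))
  have hmean : |∑ i ∈ Finset.range k, arcsineMean φ (a i) (b i)| ≤ k * ε := by
    refine (Finset.abs_sum_le_sum_abs _ _).trans ?_
    simpa using Finset.sum_le_card_nsmul (Finset.range k) _ ε fun i hi =>
      abs_arcsineMean_le hφ (ha i (Finset.mem_range.1 hi)) (hb i (Finset.mem_range.1 hi))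
  calc |spectralDiscrepancy k a b φ| ≤ k * ε + k * ε :=
        (abs_sub _ _).trans (add_le_add htrace hmean)
    _ = 2 * ε * k := by ring

theorem discreteVariation_add_two_mul_mul_le (k : ℕ) (a b : ℕ → ℝ) {c : ℝ} (hc : |c| ≤ 1) :
    discreteVariation k (fun i => a i + 2 * b i * c) ≤
      discreteVariation k a + 2 * discreteVariation k b := by
  simp only [discreteVariation, Finset.mul_sum, ← Finset.sum_add_distrib]
  refine Finset.sum_le_sum fun i _ => ?_
  rw [show a (i + 1) + 2 * b (i + 1) * c - (a i + 2 * b i * c) =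
    (a (i + 1) - a i) + 2 * (b (i + 1) - b i) * c by ring]
  exact abs_add_two_mul_mul_le le_rfl le_rfl hc

theorem abs_sum_inner_jacobiMatrix_pow_smul_planeWave_sub_le (hk : 0 < k)
    (ha : ∀ i < k, |a i| ≤ A) (hb : ∀ i < k, |b i| ≤ B) (n : ℕ) (t : ℝ) :
    |∑ i : Fin k, ⟪planeWave t (i + 1),
        (jacobiMatrix k a b ^ n • fun j : Fin k => planeWave t (j + 1)) i⟫_ℝ -
        ∑ i : Fin k, (a i + 2 * b i * Real.cos t) ^ n| ≤
      n * (A + 2 * B) ^ (n - 1) * (discreteVariation k b + 2 * B) +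
        n.choose 2 * (A + 2 * B) ^ (n - 2) *
          (2 * B * (discreteVariation k a + 2 * discreteVariation k b)) := by
  have hcos := Real.abs_cos_le_one t
  have hB : 0 ≤ B := (abs_nonneg _).trans (hb 0 hk)
  have hC : 0 ≤ A + 2 * B :=
    (abs_nonneg _).trans (abs_add_two_mul_mul_le (ha 0 hk) (hb 0 hk) hcos)
  refine (abs_sum_inner_smul_sub_le _ _ fun i : Fin k => norm_planeWave t (i + 1)).trans <|
    (sum_norm_pow_smul_sub_le (sum_abs_jacobiMatrix_col_le ha hb)
      (fun i => abs_add_two_mul_mul_le (ha i i.2) (hb i i.2) hcos)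
      (fun i => (norm_planeWave t (i + 1)).le) n).trans ?_
  gcongr
  · have hresidual := sum_norm_jacobiMatrix_smul_sub_le k a b (fun i => (norm_planeWave t i).le)
      (planeWave_add_two_add_planeWave t)
    linarith [hb 0 hk, hb (k - 1) (by omega)]
  · refine (commutatorWeight_jacobiMatrix_le a hb fun i => a i + 2 * b i * Real.cos t).trans ?_
    gcongr
    exact discreteVariation_add_two_mul_mul_le k a b hcos

theorem pi_mul_spectralDiscrepancy_pow (k : ℕ) (a b : ℕ → ℝ) (n : ℕ) :
    Real.pi * spectralDiscrepancy k a b (fun z => z ^ n) =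
      ∫ t in (0 : ℝ)..Real.pi, (∑ i : Fin k, ⟪planeWave t (i + 1),
        (jacobiMatrix k a b ^ n • fun j : Fin k => planeWave t (j + 1)) i⟫_ℝ -
        ∑ i : Fin k, (a i + 2 * b i * Real.cos t) ^ n) := by
  have hmean (x y : ℝ) : Real.pi * arcsineMean (fun z => z ^ n) x y =
      ∫ t in (0 : ℝ)..Real.pi, (x + 2 * y * Real.cos t) ^ n := by
    rw [arcsineMean, one_div, mul_inv_cancel_left₀ Real.pi_ne_zero]
  rw [intervalIntegral.integral_sub, integral_sum_inner_smul_planeWave,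
    trace_pow_eq_sum_eigenvalues_pow (jacobiMatrix_isHermitian k a b),
    intervalIntegral.integral_finsetSum]
  · simp only [spectralDiscrepancy, jacobiTrace, mul_sub, Finset.mul_sum Finset.univ, ← hmean]
    rw [Finset.mul_sum, ← Fin.sum_univ_eq_sum_range]
  · exact fun i _ => Continuous.intervalIntegrable (by fun_prop) _ _
  · exact (continuous_sum_inner_smul_planeWave _).intervalIntegrable _ _
  · exact Continuous.intervalIntegrable (by fun_prop) _ _

theorem abs_spectralDiscrepancy_pow_le (hk : 0 < k) (ha : ∀ i < k, |a i| ≤ A)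
    (hb : ∀ i < k, |b i| ≤ B) (n : ℕ) :
    |spectralDiscrepancy k a b (fun z => z ^ n)| ≤
      n * (A + 2 * B) ^ (n - 1) * (discreteVariation k b + 2 * B) +
        n.choose 2 * (A + 2 * B) ^ (n - 2) *
          (2 * B * (discreteVariation k a + 2 * discreteVariation k b)) := by
  refine le_of_mul_le_mul_left ?_ Real.pi_pos
  have habs (s : ℝ) : Real.pi * |s| = |Real.pi * s| := by
    rw [abs_mul, abs_of_pos Real.pi_pos]
  rw [habs, pi_mul_spectralDiscrepancy_pow]
  exact abs_integral_zero_pi_le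
    (abs_sum_inner_jacobiMatrix_pow_smul_planeWave_sub_le hk ha hb n)

end SpectralDiscrepancy

section Asymptotics

variable {a b : ℕ → ℕ → ℝ} {A B : ℝ}

theorem spectralDiscrepancy_pow_isLittleO (ha : ∀ k, ∀ i < k, |a k i| ≤ A)
    (hb : ∀ k, ∀ i < k, |b k i| ≤ B)
    (hVa : (fun k => discreteVariation k (a k)) =o[atTop] fun k : ℕ => (k : ℝ))
    (hVb : (fun k => discreteVariation k (b k)) =o[atTop] fun k : ℕ => (k : ℝ)) (n : ℕ) :
    (fun k => spectralDiscrepancy k (a k) (b k) fun z => z ^ n) =o[atTop]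
      fun k : ℕ => (k : ℝ) := by
  have hconst : (fun _ : ℕ => 2 * B) =o[atTop] fun k : ℕ => (k : ℝ) :=
    Asymptotics.isLittleO_const_left.2 (.inr (tendsto_norm_atTop_atTop.comp
      tendsto_natCast_atTop_atTop))
  refine Asymptotics.IsBigO.trans_isLittleO ?_
    (((hVb.add hconst).const_mul_left (n * (A + 2 * B) ^ (n - 1))).add
      (((hVa.add (hVb.const_mul_left 2)).const_mul_left (2 * B)).const_mul_left
        (n.choose 2 * (A + 2 * B) ^ (n - 2))))
  refine .of_norm_eventuallyLE ?_
  filter_upwards [eventually_gt_atTop 0] with k hk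
  exact abs_spectralDiscrepancy_pow_le hk (ha k) (hb k) n

theorem spectralDiscrepancy_polynomial_isLittleO (ha : ∀ k, ∀ i < k, |a k i| ≤ A)
    (hb : ∀ k, ∀ i < k, |b k i| ≤ B)
    (hVa : (fun k => discreteVariation k (a k)) =o[atTop] fun k : ℕ => (k : ℝ))
    (hVb : (fun k => discreteVariation k (b k)) =o[atTop] fun k : ℕ => (k : ℝ))
    (q : Polynomial ℝ) :
    (fun k => spectralDiscrepancy k (a k) (b k) fun z => q.eval z) =o[atTop]
      fun k : ℕ => (k : ℝ) := by
  induction q using Polynomial.induction_on' with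
  | add q₁ q₂ hq₁ hq₂ =>
    refine (hq₁.add hq₂).congr_left fun k => ?_
    rw [← spectralDiscrepancy_add (ha k) (hb k) q₁.continuousOn q₂.continuousOn]
    simp only [Polynomial.eval_add, Pi.add_def]
  | monomial n s =>
    refine ((spectralDiscrepancy_pow_isLittleO ha hb hVa hVb n).const_mul_left s).congr_left
      fun k => ?_
    rw [← spectralDiscrepancy_const_smul]
    simp only [Polynomial.eval_monomial, Pi.smul_def, smul_eq_mul]

theorem spectralDiscrepancy_isLittleO (ha : ∀ k, ∀ i < k, |a k i| ≤ A)
    (hb : ∀ k, ∀ i < k, |b k i| ≤ B)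
    (hVa : (fun k => discreteVariation k (a k)) =o[atTop] fun k : ℕ => (k : ℝ))
    (hVb : (fun k => discreteVariation k (b k)) =o[atTop] fun k : ℕ => (k : ℝ))
    {φ : ℝ → ℝ} (hφ : ContinuousOn φ (Set.Icc (-(A + 2 * B)) (A + 2 * B))) :
    (fun k => spectralDiscrepancy k (a k) (b k) φ) =o[atTop] fun k : ℕ => (k : ℝ) := by
  refine Asymptotics.isLittleO_iff.2 fun ε hε => ?_
  obtain ⟨q, hq⟩ := exists_polynomial_near_of_continuousOn _ _ φ hφ (ε / 4) (by positivity)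
  have hpoly := Asymptotics.isLittleO_iff.1
    (spectralDiscrepancy_polynomial_isLittleO ha hb hVa hVb q) (half_pos hε)
  filter_upwards [hpoly] with k hk
  have hsplit : spectralDiscrepancy k (a k) (b k) φ =
      spectralDiscrepancy k (a k) (b k) (fun z => q.eval z) +
        spectralDiscrepancy k (a k) (b k) (φ - fun z => q.eval z) := by
    rw [← spectralDiscrepancy_add (ha k) (hb k) q.continuousOn (hφ.sub q.continuousOn),
      add_sub_cancel]
  have hrest : |spectralDiscrepancy k (a k) (b k) (φ - fun z => q.eval z)| ≤ 2 * (ε / 4) * k :=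
    abs_spectralDiscrepancy_le (ha k) (hb k) fun z hz => by
      rw [Pi.sub_apply, abs_sub_comm]
      exact (hq z hz).le
  rw [Real.norm_natCast, Real.norm_eq_abs] at hk ⊢
  rw [hsplit]
  linarith [abs_add_le (spectralDiscrepancy k (a k) (b k) fun z => q.eval z)
    (spectralDiscrepancy k (a k) (b k) (φ - fun z => q.eval z))]

theorem MemS.abs_le_one {a : ℕ → ℕ → ℝ} (ha : MemS a) (k : ℕ) : ∀ i < k, |a k i| ≤ 1 :=
  fun i hi => abs_le.2 ⟨neg_one_lt_zero.le.trans (ha.2 k i hi).1, (ha.2 k i hi).2⟩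

theorem trace_formula_regularly_varying_general (ha : ∀ k, ∀ i < k, |a k i| ≤ A)
    (hb : ∀ k, ∀ i < k, |b k i| ≤ B)
    (hVa : (fun k => discreteVariation k (a k)) =o[atTop] fun k : ℕ => (k : ℝ))
    (hVb : (fun k => discreteVariation k (b k)) =o[atTop] fun k : ℕ => (k : ℝ))
    (μ : Measure (ℝ × ℝ))
    (hμ : ∀ ψ : ℝ × ℝ → ℝ, ContinuousOn ψ (Set.Icc (-A) A ×ˢ Set.Icc (-B) B) →
      Tendsto (fun k : ℕ => (1 / (k : ℝ)) * ∑ j ∈ Finset.range k, ψ (a k j, b k j)) atTop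
        (nhds (∫ p, ψ p ∂μ)))
    {φ : ℝ → ℝ} (hφ : ContinuousOn φ (Set.Icc (-(A + 2 * B)) (A + 2 * B))) :
    Tendsto (fun k : ℕ => (1 / (k : ℝ)) * jacobiTrace k (a k) (b k) φ) atTop
      (nhds ((1 / Real.pi) *
        ∫ p, (∫ t in (0 : ℝ)..Real.pi, φ (p.1 + 2 * p.2 * Real.cos t)) ∂μ)) := by
  have hdiscrepancy :=
    (spectralDiscrepancy_isLittleO ha hb hVa hVb hφ).tendsto_div_nhds_zero
  have hmean := hμ _ (continuousOn_arcsineMean hφ)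
  rw [← integral_const_mul]
  refine (zero_add (∫ p, arcsineMean φ p.1 p.2 ∂μ) ▸ hdiscrepancy.add hmean).congr fun k => ?_
  rw [spectralDiscrepancy]
  ring

end Asymptotics

/-- if `r` normalizes `(a^k)ₖ, (b^k)ₖ` into `𝒮` and the normalized sequence is
`μ`-distributed on `I²`, then the trace formula holds for the normalized Jacobi matrices. -/
theorem trace_formula_regularly_varying (a b : ℕ → ℕ → ℝ) (r : ℝ → ℝ)
    (hrpos : ∀ x : ℝ, 0 < x → 0 < r x)
    (ha : MemS fun k i => a k i / r k) (hb : MemS fun k i => b k i / r k)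
    (μ : Measure (ℝ × ℝ)) [IsProbabilityMeasure μ]
    (hsupp : μ ((Set.Icc (0 : ℝ) 1 ×ˢ Set.Icc (0 : ℝ) 1)ᶜ) = 0)
    (hμ : MuDistributedI (fun k i => a k i / r k) (fun k i => b k i / r k) μ)
    (φ : ℝ → ℝ) (hφ : ContinuousOn φ (Set.Icc (-3 : ℝ) 3)) :
    Filter.Tendsto
      (fun k : ℕ =>
        (1 / (k : ℝ)) * jacobiTrace k (fun i => a k i / r k) (fun i => b k i / r k) φ)
      Filter.atTop
      (nhds ((1 / Real.pi) *
        ∫ p, (∫ t in (0 : ℝ)..Real.pi, φ (p.1 + 2 * p.2 * Real.cos t)) ∂μ)) := by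
  have hsub : Set.Icc (0 : ℝ) 1 ⊆ Set.Icc (-1) 1 := Set.Icc_subset_Icc_left neg_one_lt_zero.le
  refine trace_formula_regularly_varying_general ha.abs_le_one hb.abs_le_one ha.1 hb.1 μ
    (fun ψ hψ => hμ ψ (hψ.mono (Set.prod_mono hsub hsub))) ?_
  norm_num [hφ]
end
end
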